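/- arXiv:1801.03014 — 2 statements merged into one kernel-verified Lean document; each statement's English description precedes it below -/
import Mathlib

section
/- Let Ω ⊂ ℝⁿ be a bounded Lipschitz domain, T₀ ∈ W^{1,∞}(Ω;ℝ^{N×n}), and let f ∈ C²([0,∞)) satisfy f(0) = f'(0) = 0. If u ∈ W^{2,∞}(Ω;ℝ^N) minimises the functional 𝔉[w] = ∫_Ω (f(|∇w|) − T₀ · ∇w) dx among all w ∈ W^{1,1}(Ω;ℝ^N), then u satisfies div(f'(|∇u|)|∇u|⁻¹ ∇u) = div(T₀) pointwise almost everywhere in Ω, and f'(|∇u|)|∇u|⁻¹ ∇u · ν_{∂Ω} = T₀ · ν_{∂Ω} pointwise ℋ^{n−1}-almost everywhere on ∂Ω, where ν_{∂Ω} is the outward unit normal of ∂Ω. -/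
open MeasureTheory Filter Topology Set
open scoped ENNReal RealInnerProductSpace

noncomputable section

/-- Euclidean space `ℝⁿ`. -/
abbrev EVec (n : ℕ) := EuclideanSpace ℝ (Fin n)

/-- Frobenius inner product of two "matrices". -/
def mdot {ι κ : Type*} [Fintype ι] [Fintype κ] (A B : ι → κ → ℝ) : ℝ :=
  ∑ a, ∑ i, A a i * B a i

/-- Frobenius norm. -/
noncomputable def mnorm {ι κ : Type*} [Fintype ι] [Fintype κ] (A : ι → κ → ℝ) : ℝ :=
  Real.sqrt (mdot A A)

/-- Euclidean norm of a vector given as a tuple. -/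
noncomputable def vnorm {ι : Type*} [Fintype ι] (v : ι → ℝ) : ℝ :=
  Real.sqrt (∑ a, v a ^ 2)

/-- `Ω ⊆ ℝⁿ` is a (nonempty, open, connected) Lipschitz domain: every boundary point has
a neighbourhood on which `Ω` can be flattened to a half space by a bi-Lipschitz map. -/
def IsLipschitzDomain {n : ℕ} (Ω : Set (EVec n)) : Prop :=
  IsOpen Ω ∧ Ω.Nonempty ∧ IsConnected Ω ∧
  ∀ x ∈ frontier Ω, ∃ (U : Set (EVec n)) (h hinv : EVec n → EVec n) (K : NNReal)
      (e : EVec n),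
    ‖e‖ = 1 ∧ IsOpen U ∧ x ∈ U ∧ LipschitzOnWith K h U ∧
    LipschitzOnWith K hinv (h '' U) ∧ (∀ y ∈ U, hinv (h y) = y) ∧
    h '' (U ∩ Ω) = (h '' U) ∩ {y : EVec n | 0 < ⟪e, y⟫}

/-- `Du` is the weak (distributional) gradient of `u` on `Ω`, and both are integrable;
i.e. `u ∈ W^{1,1}(Ω; ℝ^ι)` with weak gradient `Du`. -/
def HasWeakDerivOn {n : ℕ} {ι : Type*} [Fintype ι] (Ω : Set (EVec n))
    (u : EVec n → ι → ℝ) (Du : EVec n → ι → Fin n → ℝ) : Prop :=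
  IntegrableOn u Ω volume ∧ IntegrableOn Du Ω volume ∧
  ∀ φ : EVec n → ℝ, ContDiff ℝ 1 φ → HasCompactSupport φ → tsupport φ ⊆ Ω →
    ∀ (a : ι) (i : Fin n),
      ∫ x in Ω, u x a * fderiv ℝ φ x (EuclideanSpace.single i 1) =
        - ∫ x in Ω, Du x a i * φ x

/-- `u ∈ W^{1,2}(Ω;ℝ^ι)` with weak gradient `Du`. -/
def MemW12 {n : ℕ} {ι : Type*} [Fintype ι] (Ω : Set (EVec n))
    (u : EVec n → ι → ℝ) (Du : EVec n → ι → Fin n → ℝ) : Prop :=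
  HasWeakDerivOn Ω u Du ∧ IntegrableOn (fun x => vnorm (u x) ^ 2) Ω volume ∧
    IntegrableOn (fun x => mnorm (Du x) ^ 2) Ω volume

/-- vanishing mean value `(u)_Ω = 0`. -/
def ZeroMean {n : ℕ} {ι : Type*} [Fintype ι] (Ω : Set (EVec n))
    (u : EVec n → ι → ℝ) : Prop :=
  ∀ a : ι, ∫ x in Ω, u x a = 0

/-- The `L^∞(Ω)` norm of a matrix field (w.r.t. the pointwise Frobenius norm). -/
noncomputable def linfNormOn {n N : ℕ} (Ω : Set (EVec n))
    (T : EVec n → Fin N → Fin n → ℝ) : ℝ≥0∞ :=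
  essSup (fun x => ENNReal.ofReal (mnorm (T x))) (volume.restrict Ω)

/-- `T ∈ W^{1,∞}(Ω)`: bounded and Lipschitz on `Ω`. -/
def MemW1inf {n N : ℕ} (Ω : Set (EVec n)) (T : EVec n → Fin N → Fin n → ℝ) : Prop :=
  ∃ C : NNReal, (∀ x ∈ Ω, ‖T x‖ ≤ C) ∧ LipschitzOnWith C T Ω

/-- `T ∈ W^{2,∞}(Ω)`: `T` is bounded with bounded Lipschitz derivative on `Ω`. -/
def MemW2inf {n N : ℕ} (Ω : Set (EVec n)) (T : EVec n → Fin N → Fin n → ℝ) : Prop :=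
  ∃ (C : NNReal) (DT : EVec n → EVec n →L[ℝ] (Fin N → Fin n → ℝ)),
    (∀ x ∈ Ω, ‖T x‖ ≤ C) ∧ (∀ x ∈ Ω, HasFDerivWithinAt T (DT x) Ω x) ∧
    (∀ x ∈ Ω, ‖DT x‖ ≤ C) ∧ LipschitzOnWith C DT Ω

/-- The nonlinear map `A(z) = f'(|z|) z / |z|` (equal to `0` at `z = 0`). -/
noncomputable def Amap {N n : ℕ} (f' : ℝ → ℝ) (z : Fin N → Fin n → ℝ) :
    Fin N → Fin n → ℝ :=
  fun a i => (f' (mnorm z) / mnorm z) * z a i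

/-- `u` is a weak solution of the Neumann problem for the integrand `f(|·|)` and datum `T₀`. -/
def IsWeakSolution {n N : ℕ} (Ω : Set (EVec n)) (f' : ℝ → ℝ)
    (T₀ : EVec n → Fin N → Fin n → ℝ)
    (u : EVec n → Fin N → ℝ) (Du : EVec n → Fin N → Fin n → ℝ) : Prop :=
  HasWeakDerivOn Ω u Du ∧
  ∀ φ Dφ, HasWeakDerivOn Ω φ Dφ →
    ∫ x in Ω, mdot (Amap f' (Du x)) (Dφ x) = ∫ x in Ω, mdot (T₀ x) (Dφ x)

/-- The functional `𝔉[w] = ∫_Ω (f(|∇w|) − T₀ · ∇w) dx` (as a function of the gradient). -/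
noncomputable def FF {n N : ℕ} (Ω : Set (EVec n)) (f : ℝ → ℝ)
    (T₀ : EVec n → Fin N → Fin n → ℝ) (Du : EVec n → Fin N → Fin n → ℝ) : ℝ :=
  ∫ x in Ω, (f (mnorm (Du x)) - mdot (T₀ x) (Du x))

/-- The regularised functional `𝔉_k[w] = 𝔉[w] + (2k)⁻¹ ∫_Ω |∇w|² dx`. -/
noncomputable def FFk {n N : ℕ} (Ω : Set (EVec n)) (f : ℝ → ℝ)
    (T₀ : EVec n → Fin N → Fin n → ℝ) (k : ℕ)
    (Du : EVec n → Fin N → Fin n → ℝ) : ℝ :=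
  FF Ω f T₀ Du + (2 * (k : ℝ))⁻¹ * ∫ x in Ω, mnorm (Du x) ^ 2

end

/-- `ν` is the measure-theoretic outward unit normal of `Ω` at `x` (De Giorgi). -/
def IsOuterNormal {n : ℕ} (Ω : Set (EVec n)) (x ν : EVec n) : Prop :=
  ‖ν‖ = 1 ∧
  Filter.Tendsto (fun r : ℝ =>
      volume (Ω ∩ Metric.ball x r ∩ {y : EVec n | 0 < ⟪ν, y - x⟫}) /
        volume (Metric.ball x r))
    (nhdsWithin 0 (Set.Ioi 0)) (nhds 0) ∧
  Filter.Tendsto (fun r : ℝ =>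
      volume ((Metric.ball x r \ Ω) ∩ {y : EVec n | ⟪ν, y - x⟫ < 0}) /
        volume (Metric.ball x r))
    (nhdsWithin 0 (Set.Ioi 0)) (nhds 0)

section Hilb
variable {H : Type*} [NormedAddCommGroup H] [InnerProductSpace ℝ H]

theorem hA_lip (f' f'' : ℝ → ℝ)
    (hderiv' : ∀ t ∈ Set.Ici (0:ℝ), HasDerivWithinAt f' (f'' t) (Set.Ici 0) t)
    (hf''cont : ContinuousOn f'' (Set.Ici 0)) (hf'0 : f' 0 = 0) (R : ℝ) (hR : 0 ≤ R) :
    ∃ L : ℝ, 0 ≤ L ∧ ∀ z w : H, ‖z‖ ≤ R → ‖w‖ ≤ R →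
      ‖(f' ‖z‖ / ‖z‖) • z - (f' ‖w‖ / ‖w‖) • w‖ ≤ L * ‖z - w‖ := by
  have hsub : Set.Icc 0 R ⊆ Set.Ici (0:ℝ) := fun t ht => ht.1
  obtain ⟨L, hL⟩ := (isCompact_Icc (a := (0:ℝ)) (b := R)).exists_bound_of_continuousOn
    (hf''cont.mono hsub)
  have hL0 : 0 ≤ L := (norm_nonneg _).trans (hL 0 ⟨le_rfl, hR⟩)
  have hlip : ∀ s ∈ Set.Icc 0 R, ∀ t ∈ Set.Icc 0 R, |f' s - f' t| ≤ L * |s - t| := by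
    intro s hs t ht
    have := (convex_Icc (0:ℝ) R).norm_image_sub_le_of_norm_hasDerivWithin_le
      (fun x hx => (hderiv' x (hsub hx)).mono hsub) hL ht hs
    simpa using this
  have hb : ∀ s ∈ Set.Icc 0 R, |f' s / s| ≤ L := by
    intro s hs
    have := hlip s hs 0 ⟨le_rfl, hR⟩
    rw [hf'0, sub_zero, sub_zero] at this
    rcases hs.1.eq_or_lt with h | h
    · rw [← h]; simpa using hL0
    · rw [abs_div]; exact (div_le_iff₀ (abs_pos.2 h.ne')).2 this
  have hm : ∀ s : ℝ, f' s / s * s = f' s := by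
    intro s
    by_cases h : s = 0
    · simp [h, hf'0]
    · field_simp
  refine ⟨3 * L, by positivity, fun z w hz hw => ?_⟩
  have hz' : ‖z‖ ∈ Set.Icc 0 R := ⟨norm_nonneg _, hz⟩
  have hw' : ‖w‖ ∈ Set.Icc 0 R := ⟨norm_nonneg _, hw⟩
  have key : (f' ‖z‖ / ‖z‖) • z - (f' ‖w‖ / ‖w‖) • w =
      (f' ‖z‖ / ‖z‖) • (z - w) + (f' ‖z‖ / ‖z‖ - f' ‖w‖ / ‖w‖) • w := by
    module
  have hn : |‖z‖ - ‖w‖| ≤ ‖z - w‖ := abs_norm_sub_norm_le z w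
  have h2 : ‖(f' ‖z‖ / ‖z‖ - f' ‖w‖ / ‖w‖) • w‖ ≤ 2 * L * ‖z - w‖ := by
    rw [norm_smul, Real.norm_eq_abs, ← abs_of_nonneg (norm_nonneg w), ← abs_mul,
      abs_of_nonneg (norm_nonneg w)]
    have : (f' ‖z‖ / ‖z‖ - f' ‖w‖ / ‖w‖) * ‖w‖ =
        -(f' ‖z‖ / ‖z‖ * (‖z‖ - ‖w‖)) + (f' ‖z‖ - f' ‖w‖) := by
      have h1 := hm ‖z‖
      have h2 := hm ‖w‖
      linear_combination h1 - h2
    rw [this]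
    calc _ ≤ |-(f' ‖z‖ / ‖z‖ * (‖z‖ - ‖w‖))| + |f' ‖z‖ - f' ‖w‖| := abs_add_le _ _
      _ ≤ L * ‖z - w‖ + L * ‖z - w‖ := by
        rw [abs_neg, abs_mul]
        gcongr
        · exact hb _ hz'
        · exact (hlip _ hz' _ hw').trans (by gcongr)
      _ = _ := by ring
  rw [key]
  calc _ ≤ ‖(f' ‖z‖ / ‖z‖) • (z - w)‖ + _ := norm_add_le _ _
    _ ≤ L * ‖z - w‖ + 2 * L * ‖z - w‖ := by
      gcongr
      rw [norm_smul, Real.norm_eq_abs]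
      gcongr
      exact hb _ hz'
    _ = _ := by ring

theorem hF_deriv (f f' : ℝ → ℝ)
    (hderiv : ∀ t ∈ Set.Ici (0:ℝ), HasDerivWithinAt f (f' t) (Set.Ici 0) t)
    (hf'0 : f' 0 = 0) (z : H) :
    HasFDerivAt (fun z : H => f ‖z‖) (innerSL ℝ ((f' ‖z‖ / ‖z‖) • z)) z := by
  by_cases hz : z = 0
  · subst hz
    have h0 := hderiv 0 (by simp)
    rw [hf'0, hasDerivWithinAt_iff_isLittleO] at h0
    rw [hasFDerivAt_iff_isLittleO]
    have ht : Tendsto (fun z : H => ‖z‖) (𝓝 0) (𝓝[Set.Ici 0] 0) := by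
      rw [tendsto_nhdsWithin_iff]
      exact ⟨by simpa using (continuous_norm (E := H)).tendsto 0, by simp⟩
    have := h0.comp_tendsto ht
    rw [← Asymptotics.isLittleO_norm_right]
    simpa [Function.comp_def] using this
  · have hp : 0 < ‖z‖ := norm_pos_iff.2 hz
    have h1 : HasDerivAt f (f' ‖z‖) ‖z‖ :=
      (hderiv ‖z‖ hp.le).hasDerivAt (Ici_mem_nhds hp)
    have h2 : HasFDerivAt (fun z : H => ‖z‖) (‖z‖⁻¹ • innerSL ℝ z) z := by
      have h3 := (hasStrictFDerivAt_norm_sq z).hasFDerivAt.sqrt (by positivity)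
      simp only [Real.sqrt_sq (norm_nonneg _)] at h3
      convert h3 using 1
      ext v
      simp
      field_simp
    have e : innerSL ℝ ((f' ‖z‖ / ‖z‖) • z) = f' ‖z‖ • (‖z‖⁻¹ • innerSL ℝ z) := by
      rw [map_smul, smul_smul, div_eq_mul_inv]
    rw [e]
    exact h1.comp_hasFDerivAt z h2
end Hilb

noncomputable def matE (N n : ℕ) : (Fin N → Fin n → ℝ) →L[ℝ] EuclideanSpace ℝ (Fin N × Fin n) :=
  LinearMap.toContinuousLinearMap
    { toFun := fun z => WithLp.toLp 2 (fun p : Fin N × Fin n => z p.1 p.2)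
      map_add' := fun z w => by ext p; simp
      map_smul' := fun c z => by ext p; simp }

theorem matE_apply {N n : ℕ} (z : Fin N → Fin n → ℝ) (p : Fin N × Fin n) :
    matE N n z p = z p.1 p.2 := rfl

theorem mdot_eq {N n : ℕ} (z w : Fin N → Fin n → ℝ) : mdot z w = ⟪matE N n z, matE N n w⟫ := by
  rw [mdot, PiLp.inner_apply, Fintype.sum_prod_type]
  simp [matE_apply, mul_comm]

theorem mnorm_eq {N n : ℕ} (z : Fin N → Fin n → ℝ) : mnorm z = ‖matE N n z‖ := by
  rw [mnorm, mdot_eq, real_inner_self_eq_norm_sq, Real.sqrt_sq (norm_nonneg _)]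

theorem matE_Amap {N n : ℕ} (f' : ℝ → ℝ) (z : Fin N → Fin n → ℝ) :
    matE N n (Amap f' z) = (f' ‖matE N n z‖ / ‖matE N n z‖) • matE N n z := by
  ext p
  simp [matE_apply, Amap, mnorm_eq]

theorem Amap_lip {n N : ℕ} (Ω : Set (EVec n)) (f' f'' : ℝ → ℝ)
    (hderiv' : ∀ t ∈ Set.Ici (0:ℝ), HasDerivWithinAt f' (f'' t) (Set.Ici 0) t)
    (hf''cont : ContinuousOn f'' (Set.Ici 0)) (hf'0 : f' 0 = 0)
    (Du : EVec n → Fin N → Fin n → ℝ) (C : NNReal) (hb : ∀ x ∈ Ω, ‖Du x‖ ≤ C)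
    (hL : LipschitzOnWith C Du Ω) :
    ∃ K : NNReal, ∀ a i, LipschitzOnWith K (fun y => Amap f' (Du y) a i) Ω := by
  obtain ⟨L, hL0, hLip⟩ := hA_lip (H := EuclideanSpace ℝ (Fin N × Fin n)) f' f'' hderiv' hf''cont
    hf'0 (‖matE N n‖ * C) (by positivity)
  refine ⟨⟨L * (‖matE N n‖ * C), by positivity⟩, fun a i => ?_⟩
  refine LipschitzOnWith.of_dist_le_mul fun x hx y hy => ?_
  have hB : ∀ x ∈ Ω, ‖matE N n (Du x)‖ ≤ ‖matE N n‖ * C := fun x hx =>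
    ((matE N n).le_opNorm _).trans (by gcongr; exact hb x hx)
  have h1 := hLip _ _ (hB x hx) (hB y hy)
  rw [← matE_Amap, ← matE_Amap, ← map_sub, ← map_sub] at h1
  have h2 := PiLp.norm_apply_le (matE N n (Amap f' (Du x) - Amap f' (Du y))) (a, i)
  rw [matE_apply] at h2
  have h3 : ‖Du x - Du y‖ ≤ C * dist x y := by
    rw [← dist_eq_norm]; exact hL.dist_le_mul x hx y hy
  calc dist (Amap f' (Du x) a i) (Amap f' (Du y) a i)
      = ‖(Amap f' (Du x) - Amap f' (Du y)) a i‖ := by rw [dist_eq_norm]; rfl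
    _ ≤ L * (‖matE N n‖ * (C * dist x y)) := by
      refine h2.trans (h1.trans ?_)
      gcongr
      exact ((matE N n).le_opNorm _).trans (by gcongr)
    _ = L * (‖matE N n‖ * C) * dist x y := by ring

theorem weak_test {n N : ℕ} (Ω : Set (EVec n)) (φ : EVec n → ℝ) (hφ : ContDiff ℝ 1 φ)
    (hc : HasCompactSupport φ) (u : EVec n → Fin N → ℝ) (Du : EVec n → Fin N → Fin n → ℝ)
    (hu : HasWeakDerivOn Ω u Du) (a : Fin N) (t : ℝ) :
    HasWeakDerivOn Ω (fun x => u x + t • (Pi.single a (φ x) : Fin N → ℝ))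
      (fun x => Du x + t • (Pi.single a (fun i => fderiv ℝ φ x (EuclideanSpace.single i 1)) :
        Fin N → Fin n → ℝ)) := by
  have hφ' : Continuous (fderiv ℝ φ) := hφ.continuous_fderiv (by simp)
  have hc' : HasCompactSupport (fderiv ℝ φ) := hc.fderiv ℝ
  have hvi : ∀ i : Fin n, Continuous (fun x => fderiv ℝ φ x (EuclideanSpace.single i 1)) :=
    fun i => hφ'.clm_apply continuous_const
  have hvc : ∀ i : Fin n, HasCompactSupport (fun x => fderiv ℝ φ x (EuclideanSpace.single i 1)) :=
    fun i => hc'.comp_left (g := fun L : EVec n →L[ℝ] ℝ => L (EuclideanSpace.single i 1)) (by simp)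
  have hφi : Integrable φ := hφ.continuous.integrable_of_hasCompactSupport hc
  have hd : ∀ i : Fin n, Integrable (fun x => fderiv ℝ φ x (EuclideanSpace.single i 1)) :=
    fun i => (hvi i).integrable_of_hasCompactSupport (hvc i)
  refine ⟨hu.1.add (Integrable.smul t ?_), hu.2.1.add (Integrable.smul t ?_), ?_⟩
  · refine Integrable.of_eval fun b => ?_
    by_cases h : b = a
    · subst h; simpa using hφi.restrict
    · simp [h]
  · refine Integrable.of_eval fun b => ?_
    by_cases h : b = a
    · subst h
      simp only [Pi.single_eq_same]
      exact Integrable.of_eval fun i => (hd i).integrableOn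
    · simp only [Pi.single_eq_of_ne h]; exact integrable_zero _ _ _
  · intro ψ hψ hψc hψs b i
    have hψ' : Continuous (fun x => fderiv ℝ ψ x (EuclideanSpace.single i 1)) :=
      (hψ.continuous_fderiv (by simp)).clm_apply continuous_const
    have hψ'c : HasCompactSupport (fun x => fderiv ℝ ψ x (EuclideanSpace.single i 1)) :=
      (hψc.fderiv ℝ).comp_left
        (g := fun L : EVec n →L[ℝ] ℝ => L (EuclideanSpace.single i 1)) (by simp)
    have h0 := hu.2.2 ψ hψ hψc hψs b i
    have hi1 : IntegrableOn (fun x => u x b * fderiv ℝ ψ x (EuclideanSpace.single i 1)) Ω := by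
      obtain ⟨B, hB⟩ := hψ'c.exists_bound_of_continuous hψ'
      exact (hu.1.eval b).mul_bdd (c := B) hψ'.aestronglyMeasurable (ae_of_all _ hB)
    have hi2 : IntegrableOn (fun x => Du x b i * ψ x) Ω := by
      obtain ⟨B, hB⟩ := hψc.exists_bound_of_continuous hψ.continuous
      exact ((hu.2.1.eval b).eval i).mul_bdd (c := B) hψ.continuous.aestronglyMeasurable
        (ae_of_all _ hB)
    by_cases h : b = a
    · subst h
      simp only [Pi.add_apply, Pi.smul_apply, Pi.single_eq_same, smul_eq_mul, add_mul, mul_assoc]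
      have hj1 : Integrable (fun x => φ x * fderiv ℝ ψ x (EuclideanSpace.single i 1)) :=
        (hφ.continuous.mul hψ').integrable_of_hasCompactSupport hc.mul_right
      have hj2 : Integrable (fun x => fderiv ℝ φ x (EuclideanSpace.single i 1) * ψ x) :=
        ((hvi i).mul hψ.continuous).integrable_of_hasCompactSupport hψc.mul_left
      have hj3 : Integrable (fun x => φ x * ψ x) :=
        (hφ.continuous.mul hψ.continuous).integrable_of_hasCompactSupport hψc.mul_left
      have hp := integral_mul_fderiv_eq_neg_fderiv_mul_of_integrable hj2 hj1 hj3
        (fun x _ => hφ.differentiable (by simp) x) (fun x _ => hψ.differentiable (by simp) x)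
      have hs1 : ∫ x in Ω, φ x * fderiv ℝ ψ x (EuclideanSpace.single i 1) =
          ∫ x, φ x * fderiv ℝ ψ x (EuclideanSpace.single i 1) := by
        refine setIntegral_eq_integral_of_forall_compl_eq_zero fun x hx => ?_
        have : x ∉ tsupport ψ := fun h => hx (hψs h)
        have : fderiv ℝ ψ x = 0 := by
          by_contra h; exact this (support_fderiv_subset ℝ h)
        simp [this]
      have hs2 : ∫ x in Ω, fderiv ℝ φ x (EuclideanSpace.single i 1) * ψ x =
          ∫ x, fderiv ℝ φ x (EuclideanSpace.single i 1) * ψ x := by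
        refine setIntegral_eq_integral_of_forall_compl_eq_zero fun x hx => ?_
        have : ψ x = 0 := image_eq_zero_of_notMem_tsupport fun h => hx (hψs h)
        simp [this]
      rw [integral_add hi1 (hj1.integrableOn.const_mul t),
        integral_add hi2 (hj2.integrableOn.const_mul t), integral_const_mul, integral_const_mul,
        h0, hs1, hs2, hp]
      ring
    · simpa [h] using h0

theorem first_variation {n N : ℕ} (Ω : Set (EVec n)) (hΩo : IsOpen Ω)
    (hΩbdd : Bornology.IsBounded Ω)
    (f f' f'' : ℝ → ℝ)
    (hderiv : ∀ t ∈ Set.Ici (0:ℝ), HasDerivWithinAt f (f' t) (Set.Ici 0) t)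
    (hderiv' : ∀ t ∈ Set.Ici (0:ℝ), HasDerivWithinAt f' (f'' t) (Set.Ici 0) t)
    (hf''cont : ContinuousOn f'' (Set.Ici 0)) (hf'0 : f' 0 = 0)
    (T₀ : EVec n → Fin N → Fin n → ℝ) (CT : NNReal)
    (hTb : ∀ x ∈ Ω, ‖T₀ x‖ ≤ CT) (hTc : ContinuousOn T₀ Ω)
    (u : EVec n → Fin N → ℝ) (Du : EVec n → Fin N → Fin n → ℝ)
    (hu : HasWeakDerivOn Ω u Du) (C : NNReal) (hb : ∀ x ∈ Ω, ‖Du x‖ ≤ C)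
    (hDc : ContinuousOn Du Ω)
    (hmin : ∀ (w : EVec n → Fin N → ℝ) (Dw : EVec n → Fin N → Fin n → ℝ),
      HasWeakDerivOn Ω w Dw → FF Ω f T₀ Du ≤ FF Ω f T₀ Dw)
    (φ : EVec n → ℝ) (hφ : ContDiff ℝ 1 φ) (hc : HasCompactSupport φ) (a : Fin N) :
    ∫ x in Ω, ∑ i, (Amap f' (Du x) a i - T₀ x a i) *
      fderiv ℝ φ x (EuclideanSpace.single i 1) = 0 := by
  set η : EVec n → Fin N → Fin n → ℝ := fun x =>
    Pi.single a (fun i => fderiv ℝ φ x (EuclideanSpace.single i 1)) with hη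
  have hφ' : Continuous (fderiv ℝ φ) := hφ.continuous_fderiv (by simp)
  have hηc : Continuous η := by
    refine (continuous_single a).comp ?_
    exact continuous_pi fun i => hφ'.clm_apply continuous_const
  have hηs : HasCompactSupport η :=
    (hc.fderiv ℝ).comp_left (g := fun L : EVec n →L[ℝ] ℝ =>
      (Pi.single a (fun i => L (EuclideanSpace.single i 1)) : Fin N → Fin n → ℝ))
      (by ext b i; by_cases h : b = a
          · subst h; simp
          · simp [h])
  obtain ⟨B, hB⟩ := hηs.exists_bound_of_continuous hηc
  have hB0 : 0 ≤ B := (norm_nonneg _).trans (hB 0)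
  set E := matE N n
  set A : EuclideanSpace ℝ (Fin N × Fin n) → EuclideanSpace ℝ (Fin N × Fin n) :=
    fun z => (f' ‖z‖ / ‖z‖) • z with hA
  set R := ‖E‖ * (C + B) with hR
  have hR0 : 0 ≤ R := by positivity
  obtain ⟨L, hL0, hLip⟩ := hA_lip (H := EuclideanSpace ℝ (Fin N × Fin n)) f' f'' hderiv' hf''cont
    hf'0 R hR0
  have hAb : ∀ z, ‖z‖ ≤ R → ‖A z‖ ≤ L * R := by
    intro z hz
    have := hLip z 0 hz (by simpa using hR0)
    simp only [smul_zero, sub_zero] at this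
    exact this.trans (by gcongr)
  have hFc : Continuous (fun z : EuclideanSpace ℝ (Fin N × Fin n) => f ‖z‖) :=
    continuous_iff_continuousAt.2 fun z => (hF_deriv f f' hderiv hf'0 z).continuousAt
  have hfin : IsFiniteMeasure (volume.restrict Ω) :=
    ⟨by simpa using hΩbdd.measure_lt_top⟩
  have hms : MeasurableSet Ω := hΩo.measurableSet
  set G : ℝ → EVec n → ℝ := fun t x =>
    f ‖E (Du x + t • η x)‖ - ⟪E (T₀ x), E (Du x + t • η x)⟫ with hG
  set G' : ℝ → EVec n → ℝ := fun t x =>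
    ⟪A (E (Du x + t • η x)), E (η x)⟫ - ⟪E (T₀ x), E (η x)⟫ with hG'
  have hGc : ∀ t, ContinuousOn (G t) Ω := by
    intro t
    have h1 : ContinuousOn (fun x => E (Du x + t • η x)) Ω :=
      E.continuous.comp_continuousOn (hDc.add (hηc.continuousOn.const_smul t))
    exact (hFc.comp_continuousOn h1).sub ((E.continuous.comp_continuousOn hTc).inner h1)
  have hRb : ∀ x ∈ Ω, ∀ t ∈ Metric.ball (0:ℝ) 1, ‖E (Du x + t • η x)‖ ≤ R := by
    intro x hx t ht
    have ht : |t| ≤ 1 := by simpa using (mem_ball_zero_iff.1 ht).le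
    refine (E.le_opNorm _).trans ?_
    rw [hR]
    gcongr
    refine (norm_add_le _ _).trans (add_le_add (hb x hx) ?_)
    rw [norm_smul, Real.norm_eq_abs]
    calc |t| * ‖η x‖ ≤ 1 * B := by gcongr; exact hB x
      _ = B := one_mul _
  have hd : ∀ x t, HasDerivAt (fun t => G t x) (G' t x) t := by
    intro x t
    have h1 : HasDerivAt (fun t : ℝ => E (Du x + t • η x)) (E (η x)) t := by
      have : HasDerivAt (fun t : ℝ => Du x + t • η x) (η x) t := by
        simpa using ((hasDerivAt_id t).smul_const (η x)).const_add (Du x)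
      exact E.hasFDerivAt.comp_hasDerivAt t this
    have h2 := (hF_deriv f f' hderiv hf'0 (E (Du x + t • η x))).comp_hasDerivAt t h1
    have h3 := (innerSL ℝ (E (T₀ x))).hasFDerivAt.comp_hasDerivAt t h1
    exact h2.sub h3
  have hG'c : AEStronglyMeasurable (G' 0) (volume.restrict Ω) := by
    have hAc : Continuous (fun r : ℝ => r) := continuous_id
    have h1 : ContinuousOn (fun x => A (E (Du x))) Ω := by
      have hAc : ContinuousOn A (Metric.closedBall 0 R) := by
        refine LipschitzOnWith.continuousOn (K := ⟨L, hL0⟩) ?_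
        refine LipschitzOnWith.of_dist_le_mul fun x hx y hy => ?_
        rw [dist_eq_norm, dist_eq_norm]
        exact hLip x y (by simpa using hx) (by simpa using hy)
      refine hAc.comp (E.continuous.comp_continuousOn hDc) fun x hx => ?_
      have := hRb x hx 0 (by simp)
      simpa using this
    have : ContinuousOn (G' 0) Ω := by
      simp only [hG', zero_smul, add_zero]
      exact (h1.inner (E.continuous.comp hηc).continuousOn).sub
        ((E.continuous.comp_continuousOn hTc).inner (E.continuous.comp hηc).continuousOn)
    exact this.aestronglyMeasurable hms
  have hE : ∀ x, ‖E (η x)‖ ≤ ‖E‖ * B := fun x => (E.le_opNorm _).trans (by gcongr; exact hB x)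
  have hET : ∀ x ∈ Ω, ‖E (T₀ x)‖ ≤ ‖E‖ * CT :=
    fun x hx => (E.le_opNorm _).trans (by gcongr; exact hTb x hx)
  have hG0i : Integrable (G 0) (volume.restrict Ω) := by
    obtain ⟨M, hM⟩ := (isCompact_closedBall (0 : EuclideanSpace ℝ (Fin N × Fin n)) R).exists_bound_of_continuousOn
      hFc.continuousOn
    refine Integrable.of_bound ((hGc 0).aestronglyMeasurable hms) (M + ‖E‖ * CT * R) ?_
    filter_upwards [ae_restrict_mem hms] with x hx
    have h1 := hRb x hx 0 (by simp)
    refine (norm_sub_le _ _).trans (add_le_add (hM _ (by simpa using h1)) ?_)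
    refine (norm_inner_le_norm _ _).trans ?_
    gcongr
    exact hET x hx
  have hder := hasDerivAt_integral_of_dominated_loc_of_deriv_le (μ := volume.restrict Ω)
    (F := G) (F' := G') (x₀ := 0) (bound := fun _ => L * R * (‖E‖ * B) + ‖E‖ * CT * (‖E‖ * B))
    (Metric.ball_mem_nhds (0:ℝ) one_pos)
    (Eventually.of_forall fun t => (hGc t).aestronglyMeasurable hms) hG0i hG'c
    (by
      filter_upwards [ae_restrict_mem hms] with x hx t ht
      refine (norm_sub_le _ _).trans (add_le_add ?_ ?_)
      · refine (norm_inner_le_norm _ _).trans ?_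
        gcongr
        · exact hAb _ (hRb x hx t ht)
        · exact hE x
      · refine (norm_inner_le_norm _ _).trans ?_
        gcongr
        · exact hET x hx
        · exact hE x)
    (integrable_const _) (ae_of_all _ fun x t _ => hd x t)
  have hGF : ∀ t, ∫ x in Ω, G t x = FF Ω f T₀ (fun x => Du x + t • η x) := by
    intro t
    simp only [FF, hG, mnorm_eq, mdot_eq]; rfl
  have hloc : IsLocalMin (fun t => ∫ x in Ω, G t x) 0 := by
    refine Eventually.of_forall fun t => ?_
    have := hmin _ _ (weak_test Ω φ hφ hc u Du hu a t)
    simp only [hGF]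
    simpa using this
  have h0 := hloc.hasDerivAt_eq_zero hder.2
  rw [← h0]
  congr 1
  ext x
  simp only [hG', zero_smul, add_zero]
  have : A (E (Du x)) = E (Amap f' (Du x)) := (matE_Amap f' (Du x)).symm
  rw [this, ← mdot_eq, ← mdot_eq, mdot, mdot, ← Finset.sum_sub_distrib,
    Finset.sum_eq_single a]
  · simp [hη, sub_mul]
  · intro b _ hba
    simp [hη, hba]
  · simp

theorem interior_div {n : ℕ} (Ω : Set (EVec n)) (hΩo : IsOpen Ω)
    (W : Fin n → EVec n → ℝ) (K : NNReal) (hW : ∀ i, LipschitzWith K (W i))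
    (hint : ∀ φ : EVec n → ℝ, ContDiff ℝ 1 φ → HasCompactSupport φ →
      ∫ x in Ω, ∑ i, W i x * fderiv ℝ φ x (EuclideanSpace.single i 1) = 0) :
    ∀ᵐ x, x ∈ Ω → ∑ i, fderiv ℝ (W i) x (EuclideanSpace.single i 1) = 0 := by
  have hmeas : ∀ i, Measurable (fun x => lineDeriv ℝ (W i) x (EuclideanSpace.single i 1)) :=
    fun i => measurable_lineDeriv (hW i).continuous
  have hli : ∀ i, LocallyIntegrable (fun x => lineDeriv ℝ (W i) x (EuclideanSpace.single i 1)) := by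
    intro i
    refine (locallyIntegrable_const (K : ℝ)).mono (hmeas i).aestronglyMeasurable ?_
    refine ae_of_all _ fun x => ?_
    have := norm_lineDeriv_le_of_lipschitz ℝ (x₀ := x) (v := EuclideanSpace.single i (1:ℝ)) (hW i)
    simpa using this
  have key : ∀ᵐ x, x ∈ Ω → ∑ i, lineDeriv ℝ (W i) x (EuclideanSpace.single i 1) = 0 := by
    refine hΩo.ae_eq_zero_of_integral_contDiff_smul_eq_zero
      (f := fun x => ∑ i, lineDeriv ℝ (W i) x (EuclideanSpace.single i 1)) (μ := volume) ?_ ?_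
    · refine LocallyIntegrable.locallyIntegrableOn ?_ Ω
      exact locallyIntegrable_finsetSum _ fun i _ => hli i
    · intro g hg hgc hgs
      have hg1 : ContDiff ℝ 1 g := hg.of_le (by simp)
      obtain ⟨D, hD⟩ := ContDiff.lipschitzWith_of_hasCompactSupport hgc hg1 (by simp)
      have h1 : ∀ i, Integrable (fun x => lineDeriv ℝ (W i) x (EuclideanSpace.single i 1) * g x) :=
        fun i => by
          have := (hli i).integrable_smul_left_of_hasCompactSupport hg.continuous hgc
          simpa [mul_comm] using this
      have hc1 : ∀ i : Fin n, Continuous (fun x => fderiv ℝ g x (EuclideanSpace.single i 1)) :=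
        fun i => (hg1.continuous_fderiv (by simp)).clm_apply continuous_const
      have h2 : ∀ i, Integrable (fun x => W i x * fderiv ℝ g x (EuclideanSpace.single i 1)) :=
        fun i => ((hW i).continuous.mul (hc1 i)).integrable_of_hasCompactSupport
          (((hgc.fderiv ℝ).comp_left
            (g := fun L : EVec n →L[ℝ] ℝ => L (EuclideanSpace.single i 1)) (by simp)).mul_left)
      have h3 := hint g hg1 hgc
      rw [setIntegral_eq_integral_of_forall_compl_eq_zero, integral_finsetSum _ fun i _ => h2 i]
        at h3
      · calc ∫ x, g x • ∑ i, lineDeriv ℝ (W i) x (EuclideanSpace.single i 1)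
            = ∫ x, ∑ i, lineDeriv ℝ (W i) x (EuclideanSpace.single i 1) * g x := by
              simp only [smul_eq_mul, mul_comm (g _), Finset.sum_mul]
          _ = ∑ i, ∫ x, lineDeriv ℝ (W i) x (EuclideanSpace.single i 1) * g x :=
              integral_finsetSum _ fun i _ => h1 i
          _ = ∑ i, -∫ x, W i x * fderiv ℝ g x (EuclideanSpace.single i 1) := by
              refine Finset.sum_congr rfl fun i _ => ?_
              rw [(hW i).integral_lineDeriv_mul_eq hD hgc, ← integral_neg]
              congr 1
              ext x
              rw [(hg1.differentiable (by simp) x).lineDeriv_eq_fderiv, map_neg]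
              ring
          _ = 0 := by rw [Finset.sum_neg_distrib, h3, neg_zero]
      · intro x hx
        have : x ∉ tsupport g := fun h => hx (hgs h)
        have : fderiv ℝ g x = 0 := by
          by_contra h; exact this (support_fderiv_subset ℝ h)
        simp [this]
  have hdiff : ∀ᵐ x, ∀ i, DifferentiableAt ℝ (W i) x :=
    ae_all_iff.2 fun i => (hW i).ae_differentiableAt
  filter_upwards [key, hdiff] with x hx hd hxΩ
  rw [← hx hxΩ]
  exact Finset.sum_congr rfl fun i _ => (hd i).lineDeriv_eq_fderiv.symm

theorem max_sq_deriv (s : ℝ) : HasDerivAt (fun s : ℝ => (max s 0) ^ 2) (2 * max s 0) s := by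
  rcases lt_trichotomy s 0 with h | h | h
  · rw [max_eq_right h.le, mul_zero]
    refine (hasDerivAt_const s (0:ℝ)).congr_of_eventuallyEq ?_
    filter_upwards [Iio_mem_nhds h] with t ht
    rw [max_eq_right (le_of_lt ht)]; simp
  · subst h
    rw [max_self, mul_zero, hasDerivAt_iff_isLittleO]
    have : (fun t : ℝ => t ^ 2) =o[𝓝 0] fun t => t := by
      simpa using Asymptotics.isLittleO_pow_pow (𝕜 := ℝ) (m := 1) (n := 2) one_lt_two
    refine Asymptotics.IsBigO.trans_isLittleO ?_ (by simpa using this)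
    refine Asymptotics.IsBigO.of_bound 1 (Eventually.of_forall fun t => ?_)
    simp only [max_self, smul_zero, sub_zero, one_mul, norm_pow, Real.norm_eq_abs]
    rw [zero_pow two_ne_zero, sub_zero, abs_of_nonneg (by positivity)]
    rcases le_total t 0 with h | h
    · rw [max_eq_right h, zero_pow two_ne_zero]; positivity
    · rw [max_eq_left h, sq_abs]
  · rw [max_eq_left h.le]
    have : HasDerivAt (fun s : ℝ => s ^ 2) (2 * s) s := by simpa using hasDerivAt_pow 2 s
    refine this.congr_of_eventuallyEq ?_
    filter_upwards [Ioi_mem_nhds h] with t ht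
    rw [max_eq_left (le_of_lt ht)]

theorem max_sq_contDiff : ContDiff ℝ 1 (fun s : ℝ => (max s 0) ^ 2) := by
  rw [contDiff_one_iff_deriv]
  refine ⟨fun s => (max_sq_deriv s).differentiableAt, ?_⟩
  have : deriv (fun s : ℝ => (max s 0) ^ 2) = fun s => 2 * max s 0 :=
    funext fun s => (max_sq_deriv s).deriv
  rw [this]
  fun_prop

theorem bump_test {n : ℕ} (Ω : Set (EVec n))
    (W : Fin n → EVec n → ℝ)
    (hint : ∀ φ : EVec n → ℝ, ContDiff ℝ 1 φ → HasCompactSupport φ →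
      ∫ x in Ω, ∑ i, W i x * fderiv ℝ φ x (EuclideanSpace.single i 1) = 0)
    (x : EVec n) (r : ℝ) (hr : 0 < r) :
    ∫ y in Ω, max (r ^ 2 - ‖y - x‖ ^ 2) 0 * ⟪(WithLp.toLp 2 (fun i => W i y) : EVec n), y - x⟫ = 0 := by
  have hin : ContDiff ℝ 1 (fun y : EVec n => r ^ 2 - ‖y - x‖ ^ 2) :=
    contDiff_const.sub ((contDiff_id.sub contDiff_const).norm_sq ℝ)
  have h := hint (fun y => (max (r ^ 2 - ‖y - x‖ ^ 2) 0) ^ 2) (max_sq_contDiff.comp hin) ?_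
  · have hfd : ∀ y : EVec n, HasFDerivAt (fun y => (max (r ^ 2 - ‖y - x‖ ^ 2) 0) ^ 2)
        ((-4 * max (r ^ 2 - ‖y - x‖ ^ 2) 0) • innerSL ℝ (y - x)) y := by
      intro y
      have h1 : HasFDerivAt (fun y : EVec n => r ^ 2 - ‖y - x‖ ^ 2)
          (-((2:ℝ) • innerSL ℝ (y - x))) y := by
        have h2 := ((hasFDerivAt_id (𝕜 := ℝ) y).sub_const x).norm_sq.const_sub (r ^ 2)
        have e : -((2:ℝ) • innerSL ℝ (y - x)) = -(2 • (innerSL ℝ (id y - x)).comp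
            (ContinuousLinearMap.id ℝ (EVec n))) := by
          ext v
          simp
        rw [e]; exact h2
      have h3 := (max_sq_deriv (r ^ 2 - ‖y - x‖ ^ 2)).comp_hasFDerivAt y h1
      have e : (-4 * max (r ^ 2 - ‖y - x‖ ^ 2) 0) • innerSL ℝ (y - x) =
        (2 * max (r ^ 2 - ‖y - x‖ ^ 2) 0) • (-((2:ℝ) • innerSL ℝ (y - x))) := by module
      rw [e]; exact h3
    have hcong : ∀ y : EVec n, ∑ i, W i y * fderiv ℝ (fun y => (max (r ^ 2 - ‖y - x‖ ^ 2) 0) ^ 2) y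
          (EuclideanSpace.single i 1) =
        -4 * (max (r ^ 2 - ‖y - x‖ ^ 2) 0 * ⟪(WithLp.toLp 2 (fun i => W i y) : EVec n), y - x⟫) := by
      intro y
      rw [(hfd y).fderiv, PiLp.inner_apply, Finset.mul_sum, Finset.mul_sum]
      refine Finset.sum_congr rfl fun i _ => ?_
      simp [EuclideanSpace.inner_single_right]
      ring
    simp only [hcong, integral_const_mul] at h
    simpa using h
  · refine HasCompactSupport.intro (isCompact_closedBall x r) fun y hy => ?_
    have : r < ‖y - x‖ := by simpa [dist_eq_norm] using hy
    rw [max_eq_right (by nlinarith)]; simp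

theorem half_integral {n : ℕ} (ν c : EVec n) (hν : ‖ν‖ = 1)
    (h : ∫ z in {z : EVec n | ⟪ν, z⟫ < 0}, max (1 - ‖z‖ ^ 2) 0 * ⟪c, z⟫ = 0) : ⟪c, ν⟫ = 0 := by
  set S := {z : EVec n | ⟪ν, z⟫ < 0} with hS
  have hSm : MeasurableSet S :=
    (isOpen_lt (by fun_prop) continuous_const).measurableSet
  have hcs : ∀ d : EVec n, Integrable (fun z : EVec n => max (1 - ‖z‖ ^ 2) 0 * ⟪d, z⟫) := by
    intro d
    refine Continuous.integrable_of_hasCompactSupport (by fun_prop) ?_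
    refine HasCompactSupport.intro (isCompact_closedBall 0 1) fun y hy => ?_
    have : 1 < ‖y‖ := by simpa using hy
    rw [max_eq_right (by nlinarith)]; simp
  set R := (Submodule.reflection (ℝ ∙ ν)) with hR
  have hRz : ∀ z, R z = (2 * ⟪ν, z⟫) • ν - z := by
    intro z
    rw [hR, Submodule.reflection_singleton_apply]
    simp [hν, two_smul, two_mul, add_smul]
  have hνR : ∀ z, ⟪ν, R z⟫ = ⟪ν, z⟫ := by
    intro z
    rw [hRz, inner_sub_right, inner_smul_right, real_inner_self_eq_norm_sq, hν]; ring
  have hpre : R ⁻¹' S = S := by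
    ext z; simp [hS, hνR]
  have h2 : ∫ z in S, max (1 - ‖z‖ ^ 2) 0 * ⟪c, R z⟫ = 0 := by
    have h3 := (R.measurePreserving).setIntegral_preimage_emb
      (R.toHomeomorph.measurableEmbedding) (fun z => max (1 - ‖z‖ ^ 2) 0 * ⟪c, z⟫) S
    rw [hpre, h] at h3
    simpa using h3
  have h4 : ∫ z in S, max (1 - ‖z‖ ^ 2) 0 * ⟪c, R z⟫ =
      2 * ⟪c, ν⟫ * ∫ z in S, max (1 - ‖z‖ ^ 2) 0 * ⟪ν, z⟫ := by
    have : ∀ z, max (1 - ‖z‖ ^ 2) 0 * ⟪c, R z⟫ =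
        2 * ⟪c, ν⟫ * (max (1 - ‖z‖ ^ 2) 0 * ⟪ν, z⟫) - max (1 - ‖z‖ ^ 2) 0 * ⟪c, z⟫ := by
      intro z
      rw [hRz, inner_sub_right, inner_smul_right]; ring
    simp only [this]
    rw [integral_sub ((hcs ν).integrableOn.const_mul _) (hcs c).integrableOn, h, sub_zero,
      integral_const_mul]
  have h5 : 0 < ∫ z : EVec n, max (1 - ‖z‖ ^ 2) 0 * max (-⟪ν, z⟫) 0 := by
    refine Continuous.integral_pos_of_hasCompactSupport_nonneg_nonzero (x := (-(1/2:ℝ)) • ν)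
      (by fun_prop) ?_ (fun z => by positivity) ?_
    · refine HasCompactSupport.intro (isCompact_closedBall 0 1) fun y hy => ?_
      have : 1 < ‖y‖ := by simpa using hy
      rw [max_eq_right (by nlinarith)]; simp
    · rw [norm_smul, inner_smul_right, real_inner_self_eq_norm_sq, hν]
      norm_num
  have h6 : ∫ z in S, max (1 - ‖z‖ ^ 2) 0 * ⟪ν, z⟫ =
      - ∫ z : EVec n, max (1 - ‖z‖ ^ 2) 0 * max (-⟪ν, z⟫) 0 := by
    rw [← integral_indicator hSm, ← integral_neg]
    congr 1
    ext z
    by_cases hz : z ∈ S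
    · rw [indicator_of_mem hz, max_eq_left (a := -⟪ν, z⟫)]
      · ring
      · have : ⟪ν, z⟫ < 0 := hz
        linarith
    · rw [indicator_of_notMem hz, max_eq_right (a := -⟪ν, z⟫)]
      · ring
      · have : ¬ ⟪ν, z⟫ < 0 := hz
        linarith
  rw [h4, h6] at h2
  have := mul_eq_zero.1 h2
  rcases this with h | h
  · linarith
  · linarith

theorem boundary_normal {n : ℕ} (Ω : Set (EVec n)) (hΩo : IsOpen Ω) (x ν : EVec n)
    (hν : IsOuterNormal Ω x ν) (w : EVec n → EVec n) (K : NNReal) (hw : LipschitzWith K w)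
    (hint : ∀ r : ℝ, 0 < r →
      ∫ y in Ω, max (r ^ 2 - ‖y - x‖ ^ 2) 0 * ⟪w y, y - x⟫ = 0) : ⟪w x, ν⟫ = 0 := by
  obtain ⟨hν1, hd1, hd2⟩ := hν
  set c := w x with hc
  refine half_integral ν c hν1 ?_
  set Q1 := ∫ z in {z : EVec n | ⟪ν, z⟫ < 0}, max (1 - ‖z‖ ^ 2) 0 * ⟪c, z⟫ with hQ1
  set m := volume.real (Metric.ball (0 : EVec n) 1) with hm
  have hνne : ν ≠ 0 := by intro h; simp [h] at hν1
  set δ₁ : ℝ → ℝ := fun r => (volume (Ω ∩ Metric.ball x r ∩ {y : EVec n | 0 < ⟪ν, y - x⟫}) /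
        volume (Metric.ball x r)).toReal with hδ₁
  set δ₂ : ℝ → ℝ := fun r => (volume ((Metric.ball x r \ Ω) ∩ {y : EVec n | ⟪ν, y - x⟫ < 0}) /
        volume (Metric.ball x r)).toReal with hδ₂
  have hδ₁t : Tendsto δ₁ (𝓝[>] 0) (𝓝 0) := by
    simpa [hδ₁, hδ₂, Function.comp_def] using (ENNReal.tendsto_toReal (by simp)).comp hd1
  have hδ₂t : Tendsto δ₂ (𝓝[>] 0) (𝓝 0) := by
    simpa [hδ₁, hδ₂, Function.comp_def] using (ENNReal.tendsto_toReal (by simp)).comp hd2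
  have hball : ∀ r : ℝ, 0 < r → volume.real (Metric.ball x r) = r ^ n * m := by
    intro r hr
    rw [measureReal_def, Measure.addHaar_ball_of_pos volume x hr, ENNReal.toReal_mul,
      ENNReal.toReal_ofReal (by positivity), finrank_euclideanSpace_fin, hm, measureReal_def]
  have hplane : volume {y : EVec n | ⟪ν, y - x⟫ = 0} = 0 := by
    have h0 : volume (((ℝ ∙ ν)ᗮ : Submodule ℝ (EVec n)) : Set (EVec n)) = 0 := by
      refine Measure.addHaar_submodule _ _ fun h => hνne ?_
      have : ν ∈ (ℝ ∙ ν)ᗮ := by rw [h]; trivial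
      rw [Submodule.mem_orthogonal_singleton_iff_inner_right] at this
      simpa using this
    have h1 : {y : EVec n | ⟪ν, y - x⟫ = 0} =
        (fun y => y - x) ⁻¹' (((ℝ ∙ ν)ᗮ : Submodule ℝ (EVec n)) : Set (EVec n)) := by
      ext y
      simp [Submodule.mem_orthogonal_singleton_iff_inner_right]
    simp only [sub_eq_add_neg] at h1 ⊢
    rw [h1, measure_preimage_add_right, h0]
  have hmain : ∀ r : ℝ, 0 < r → |Q1| ≤ m * (K * r + ‖c‖ * (δ₁ r + δ₂ r)) := by
    intro r hr
    set B := Metric.ball x r with hB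
    have hBfin : volume B < ∞ := Metric.isBounded_ball.measure_lt_top
    have hBpos : 0 < volume B := Metric.measure_ball_pos volume x hr
    set g : EVec n → ℝ := fun y => max (r ^ 2 - ‖y - x‖ ^ 2) 0 with hg
    have hg0 : ∀ y, 0 ≤ g y := fun y => le_max_right _ _
    have hgr : ∀ y, g y ≤ r ^ 2 := fun y => max_le (by nlinarith [norm_nonneg (y - x)]) (by positivity)
    have hgB : ∀ y, y ∉ B → g y = 0 := by
      intro y hy
      have : r ≤ ‖y - x‖ := by simpa [hB, dist_eq_norm] using hy
      exact max_eq_right (by nlinarith)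
    have hyB : ∀ y ∈ B, ‖y - x‖ ≤ r := by
      intro y hy
      rw [← dist_eq_norm]; exact (Metric.mem_ball.1 hy).le
    have hgc : Continuous g := by fun_prop
    have hgs : HasCompactSupport g := by
      refine HasCompactSupport.intro (isCompact_closedBall x r) fun y hy => hgB y ?_
      exact fun h => hy (Metric.ball_subset_closedBall h)
    set F : EVec n → ℝ := fun y => g y * ⟪c, y - x⟫ with hF
    have hFi : Integrable F :=
      (hgc.mul (by fun_prop : Continuous fun y => ⟪c, y - x⟫)).integrable_of_hasCompactSupport
        hgs.mul_right
    have hFb : ∀ y ∈ B, ‖F y‖ ≤ r ^ 2 * (‖c‖ * r) := by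
      intro y hy
      rw [hF, norm_mul, Real.norm_eq_abs, abs_of_nonneg (hg0 y)]
      gcongr
      · exact hgr y
      · exact (norm_inner_le_norm _ _).trans (by gcongr; exact hyB y hy)
    have hsetB : ∀ (G : EVec n → ℝ) (s : Set (EVec n)) (b : ℝ), 0 ≤ b → MeasurableSet s →
        (∀ y, y ∉ B → G y = 0) → (∀ y ∈ B, ‖G y‖ ≤ b) →
        |∫ y in s, G y| ≤ b * volume.real (s ∩ B) := by
      intro G s b hb hs h0 h1
      have : ∫ y in s, G y = ∫ y in s ∩ B, G y := by
        refine setIntegral_eq_of_subset_of_forall_sdiff_eq_zero hs inter_subset_left ?_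
        intro y hy
        exact h0 y fun h => hy.2 ⟨hy.1, h⟩
      rw [this]
      exact norm_setIntegral_le_of_norm_le_const
        ((measure_mono inter_subset_right).trans_lt hBfin) (fun y hy => h1 y hy.2)
    set S := {y : EVec n | ⟪ν, y - x⟫ < 0} with hS
    have hSm : MeasurableSet S :=
      (isOpen_lt (by fun_prop) continuous_const).measurableSet
    have hΩm := hΩo.measurableSet
    -- estimate of P
    have hP : |∫ y in Ω, F y| ≤ r ^ 2 * (K * r * r) * volume.real B := by
      have hwi : Integrable (fun y => g y * ⟪w y, y - x⟫) :=
        (hgc.mul (hw.continuous.inner (by fun_prop))).integrable_of_hasCompactSupport hgs.mul_right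
      have e : ∫ y in Ω, F y = ∫ y in Ω, g y * ⟪c - w y, y - x⟫ := by
        have : ∀ y, g y * ⟪c - w y, y - x⟫ = F y - g y * ⟪w y, y - x⟫ := by
          intro y; rw [inner_sub_left, hF]; ring
        simp only [this]
        rw [integral_sub hFi.integrableOn hwi.integrableOn, hint r hr, sub_zero]
      rw [e]
      refine (hsetB _ Ω (r ^ 2 * (K * r * r)) (by positivity) hΩm ?_ ?_).trans ?_
      · intro y hy; rw [hgB y hy, zero_mul]
      · intro y hy
        rw [norm_mul, Real.norm_eq_abs, abs_of_nonneg (hg0 y)]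
        gcongr
        · exact hgr y
        · refine (norm_inner_le_norm _ _).trans ?_
          gcongr
          · rw [← dist_eq_norm]
            refine (hw.dist_le_mul x y).trans ?_
            gcongr
            rw [dist_comm]; exact (Metric.mem_ball.1 hy).le
          · exact hyB y hy
      · gcongr
        · exact hBfin.ne
        · exact inter_subset_right
    have hFz : ∀ y, y ∉ B → F y = 0 := fun y hy => by rw [hF]; simp [hgB y hy]
    have h1 : |∫ y in Ω \ S, F y| ≤ r ^ 2 * (‖c‖ * r) * (δ₁ r * volume.real B) := by
      refine (hsetB F (Ω \ S) _ (by positivity) (hΩm.diff hSm) hFz hFb).trans ?_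
      gcongr
      have : δ₁ r * volume.real B =
          volume.real (Ω ∩ B ∩ {y : EVec n | 0 < ⟪ν, y - x⟫}) := by
        rw [hδ₁, measureReal_def, measureReal_def, ← ENNReal.toReal_mul,
          ENNReal.div_mul_cancel hBpos.ne' hBfin.ne]
      rw [this]
      refine ENNReal.toReal_mono ?_ ?_
      · exact ((measure_mono (inter_subset_left.trans inter_subset_right)).trans_lt hBfin).ne
      · have hsub : (Ω \ S) ∩ B ⊆ (Ω ∩ B ∩ {y : EVec n | 0 < ⟪ν, y - x⟫}) ∪
            {y : EVec n | ⟪ν, y - x⟫ = 0} := by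
          rintro y ⟨⟨hy1, hy2⟩, hy3⟩
          have hy2 : 0 ≤ ⟪ν, y - x⟫ := not_lt.1 hy2
          rcases hy2.eq_or_lt with h | h
          · right; exact h.symm
          · left; exact ⟨⟨hy1, hy3⟩, h⟩
        refine (measure_mono hsub).trans ((measure_union_le _ _).trans ?_)
        rw [hplane, add_zero]
    have h2 : |∫ y in S \ Ω, F y| ≤ r ^ 2 * (‖c‖ * r) * (δ₂ r * volume.real B) := by
      refine (hsetB F (S \ Ω) _ (by positivity) (hSm.diff hΩm) hFz hFb).trans ?_
      gcongr
      have : δ₂ r * volume.real B = volume.real ((B \ Ω) ∩ S) := by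
        rw [hδ₂, measureReal_def, measureReal_def, ← ENNReal.toReal_mul,
          ENNReal.div_mul_cancel hBpos.ne' hBfin.ne]
      rw [this]
      refine le_of_eq ?_
      congr 1
      ext y; simp only [mem_inter_iff, Set.mem_sdiff]; tauto
    have h3 : ∫ y in S, F y = (∫ y in Ω, F y) - (∫ y in Ω \ S, F y) + ∫ y in S \ Ω, F y := by
      have e1 := integral_inter_add_sdiff (s := Ω) hSm hFi.integrableOn
      have e2 := integral_inter_add_sdiff (s := S) hΩm hFi.integrableOn
      rw [inter_comm] at e2
      linarith
    have hQ : ∫ y in S, F y = r ^ n * r ^ 3 * Q1 := by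
      rw [← integral_indicator hSm]
      have e0 : ∫ y, S.indicator F y = ∫ y, S.indicator F (y + x) :=
        (integral_add_right_eq_self (S.indicator F) x).symm
      have e1 := Measure.integral_comp_smul (volume : Measure (EVec n))
        (fun y => S.indicator F (y + x)) r
      have e2 : ∫ z : EVec n, S.indicator F (r • z + x) = r ^ 3 * Q1 := by
        rw [hQ1, ← integral_indicator ((isOpen_lt (by fun_prop) continuous_const).measurableSet),
          ← integral_const_mul]
        congr 1
        ext z
        have hmem : r • z + x ∈ S ↔ z ∈ {z : EVec n | ⟪ν, z⟫ < 0} := by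
          simp only [hS, mem_ofPred_eq, add_sub_cancel_right, inner_smul_right]
          constructor
          · intro h; by_contra h'; push Not at h'; nlinarith [mul_nonneg hr.le h']
          · intro h; exact mul_neg_of_pos_of_neg hr h
        by_cases hz : z ∈ {z : EVec n | ⟪ν, z⟫ < 0}
        · rw [indicator_of_mem (hmem.2 hz), indicator_of_mem hz]
          simp only [hF, hg, add_sub_cancel_right, inner_smul_right, norm_smul, Real.norm_eq_abs,
            abs_of_pos hr]
          have : max (r ^ 2 - (r * ‖z‖) ^ 2) 0 = r ^ 2 * max (1 - ‖z‖ ^ 2) 0 := by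
            rw [mul_max_of_nonneg _ _ (by positivity)]; congr 1 <;> ring
          rw [this]; ring
        · rw [indicator_of_notMem (fun h => hz (hmem.1 h)), indicator_of_notMem hz, mul_zero]
      rw [e2, finrank_euclideanSpace_fin, abs_of_pos (by positivity), smul_eq_mul] at e1
      rw [e0, mul_assoc, e1]
      field_simp
    have h4 : |r ^ n * r ^ 3 * Q1| ≤ r ^ 2 * (K * r * r) * volume.real B +
        r ^ 2 * (‖c‖ * r) * (δ₁ r * volume.real B) + r ^ 2 * (‖c‖ * r) * (δ₂ r * volume.real B) := by
      rw [← hQ, h3]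
      refine (abs_add_le _ _).trans (add_le_add ((abs_sub _ _).trans (add_le_add hP h1)) h2)
    rw [hball r hr, abs_mul, abs_of_pos (by positivity)] at h4
    have hpos : 0 < r ^ n * r ^ 3 := by positivity
    refine le_of_mul_le_mul_left (h4.trans (le_of_eq ?_)) hpos
    ring
  have hlim : Tendsto (fun r => m * (K * r + ‖c‖ * (δ₁ r + δ₂ r))) (𝓝[>] 0) (𝓝 0) := by
    have h1 : Tendsto (fun r : ℝ => r) (𝓝[>] 0) (𝓝 0) := nhdsWithin_le_nhds
    have := ((h1.const_mul (K:ℝ)).add ((hδ₁t.add hδ₂t).const_mul ‖c‖)).const_mul m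
    simpa using this
  have : |Q1| ≤ 0 := ge_of_tendsto hlim (by
    filter_upwards [self_mem_nhdsWithin] with r hr using hmain r hr)
  exact abs_nonpos_iff.1 this

/-- **Lemma 1.3 (consistency).** If `f ∈ C²([0,∞))` with `f(0) = f'(0) = 0`,
`T₀ ∈ W^{1,∞}(Ω;ℝ^{N×n})` and `u ∈ W^{2,∞}(Ω;ℝ^N)` minimises
`𝔉[w] = ∫_Ω (f(|∇w|) − T₀·∇w) dx` among all `w ∈ W^{1,1}(Ω;ℝ^N)`, then
`div(f'(|∇u|)|∇u|⁻¹∇u) = div T₀` a.e. in `Ω` and the Neumann boundary condition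
`f'(|∇u|)|∇u|⁻¹∇u · ν_∂Ω = T₀ · ν_∂Ω` holds `ℋ^{n-1}`-a.e. on `∂Ω` (expressed via
boundary limits from inside `Ω` against any measure-theoretic outward unit normal). -/
theorem minimiser_solves_pointwise
    {n N : ℕ} (Ω : Set (EVec n))
    (hΩ : IsLipschitzDomain Ω) (hΩbdd : Bornology.IsBounded Ω)
    (f f' f'' : ℝ → ℝ)
    (hderiv : ∀ t ∈ Set.Ici (0:ℝ), HasDerivWithinAt f (f' t) (Set.Ici 0) t)
    (hderiv' : ∀ t ∈ Set.Ici (0:ℝ), HasDerivWithinAt f' (f'' t) (Set.Ici 0) t)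
    (hf''cont : ContinuousOn f'' (Set.Ici 0))
    (hf0 : f 0 = 0) (hf'0 : f' 0 = 0)
    (T₀ : EVec n → Fin N → Fin n → ℝ)
    (hT : MemW1inf Ω T₀)
    (u : EVec n → Fin N → ℝ) (Du : EVec n → Fin N → Fin n → ℝ)
    (hu : HasWeakDerivOn Ω u Du)
    -- `u ∈ W^{2,∞}(Ω;ℝ^N)`: `u` is (classically) differentiable on `Ω` with gradient `Du`,
    -- and `u`, `Du` are bounded with `Du` Lipschitz on `Ω`
    (hclass : ∀ x ∈ Ω, ∀ a : Fin N,
      HasFDerivAt (fun y => u y a)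
        (innerSL ℝ ((WithLp.equiv 2 (Fin n → ℝ)).symm (Du x a))) x)
    (hW2inf : ∃ C : NNReal, (∀ x ∈ Ω, ‖u x‖ ≤ C ∧ ‖Du x‖ ≤ C) ∧
      LipschitzOnWith C Du Ω)
    (hmin : ∀ (w : EVec n → Fin N → ℝ) (Dw : EVec n → Fin N → Fin n → ℝ),
      HasWeakDerivOn Ω w Dw → FF Ω f T₀ Du ≤ FF Ω f T₀ Dw) :
    (∀ᵐ x ∂(volume.restrict Ω), ∀ a : Fin N,
      (∀ i : Fin n, DifferentiableAt ℝ (fun y => Amap f' (Du y) a i) x ∧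
        DifferentiableAt ℝ (fun y => T₀ y a i) x) ∧
      ∑ i : Fin n, fderiv ℝ (fun y => Amap f' (Du y) a i) x (EuclideanSpace.single i 1) =
        ∑ i : Fin n, fderiv ℝ (fun y => T₀ y a i) x (EuclideanSpace.single i 1)) ∧
    (∀ᵐ x ∂((μH[(n : ℝ) - 1]).restrict (frontier Ω)), ∀ νx : EVec n,
      IsOuterNormal Ω x νx → ∀ a : Fin N,
        Filter.Tendsto
          (fun y => ∑ i : Fin n, (Amap f' (Du y) a i - T₀ y a i) * νx i)
          (nhdsWithin x Ω) (nhds 0)) := by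

  obtain ⟨CT, hTb, hTL⟩ := hT
  obtain ⟨C, hCb, hDL⟩ := hW2inf
  have hΩo : IsOpen Ω := hΩ.1
  obtain ⟨K, hK⟩ := Amap_lip Ω f' f'' hderiv' hf''cont hf'0 Du C (fun x hx => (hCb x hx).2) hDL
  have hTi : ∀ a i, LipschitzOnWith CT (fun y => T₀ y a i) Ω := by
    intro a i
    refine LipschitzOnWith.of_dist_le_mul fun x hx y hy => ?_
    exact ((dist_le_pi_dist (T₀ x a) (T₀ y a) i).trans (dist_le_pi_dist (T₀ x) (T₀ y) a)).trans
      (hTL.dist_le_mul x hx y hy)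
  have hV : ∀ a i, LipschitzOnWith (K + CT) (fun y => Amap f' (Du y) a i - T₀ y a i) Ω :=
    fun a i => (hK a i).sub (hTi a i)
  choose W hWL hWE using fun a i => (hV a i).extend_real
  have hint : ∀ a, ∀ φ : EVec n → ℝ, ContDiff ℝ 1 φ → HasCompactSupport φ →
      ∫ x in Ω, ∑ i, W a i x * fderiv ℝ φ x (EuclideanSpace.single i 1) = 0 := by
    intro a φ hφ hc
    rw [← first_variation Ω hΩo hΩbdd f f' f'' hderiv hderiv' hf''cont hf'0 T₀ CT hTb
      hTL.continuousOn u Du hu C (fun x hx => (hCb x hx).2) hDL.continuousOn hmin φ hφ hc a]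
    refine setIntegral_congr_fun hΩo.measurableSet fun x hx => ?_
    refine Finset.sum_congr rfl fun i _ => ?_
    have := hWE a i hx
    simp only at this
    rw [this]
  refine ⟨?_, ?_⟩
  · rw [ae_restrict_iff' hΩo.measurableSet]
    have h1 : ∀ᵐ x : EVec n, ∀ a, x ∈ Ω →
        ∑ i, fderiv ℝ (W a i) x (EuclideanSpace.single i 1) = 0 :=
      ae_all_iff.2 fun a => interior_div Ω hΩo (W a) (K + CT) (hWL a) (hint a)
    have h2 : ∀ᵐ x : EVec n, ∀ a i, x ∈ Ω →
        DifferentiableWithinAt ℝ (fun y => Amap f' (Du y) a i) Ω x :=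
      ae_all_iff.2 fun a => ae_all_iff.2 fun i => (hK a i).ae_differentiableWithinAt_of_mem
    have h3 : ∀ᵐ x : EVec n, ∀ a i, x ∈ Ω → DifferentiableWithinAt ℝ (fun y => T₀ y a i) Ω x :=
      ae_all_iff.2 fun a => ae_all_iff.2 fun i => (hTi a i).ae_differentiableWithinAt_of_mem
    filter_upwards [h1, h2, h3] with x h1 h2 h3 hx a
    have hn := hΩo.mem_nhds hx
    have hA := fun i => (h2 a i hx).differentiableAt hn
    have hT := fun i => (h3 a i hx).differentiableAt hn
    refine ⟨fun i => ⟨hA i, hT i⟩, ?_⟩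
    rw [← sub_eq_zero, ← Finset.sum_sub_distrib, ← h1 a hx]
    refine Finset.sum_congr rfl fun i _ => ?_
    have e : W a i =ᶠ[𝓝 x] fun y => Amap f' (Du y) a i - T₀ y a i := by
      filter_upwards [hn] with y hy using (hWE a i hy).symm
    rw [e.fderiv_eq, fderiv_fun_sub (hA i) (hT i)]
    rfl
  · refine ae_of_all _ fun x ν hν a => ?_
    have hw : LipschitzWith _ (fun y => (WithLp.toLp 2 (fun i => W a i y) : EVec n)) :=
      (PiLp.lipschitzWith_toLp 2 (fun _ : Fin n => ℝ)).comp
        (LipschitzWith.of_dist_le_mul (K := K + CT) (f := fun y i => W a i y) fun y z =>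
          (dist_pi_le_iff (by positivity)).2 fun i => (hWL a i).dist_le_mul y z)
    have h0 := boundary_normal Ω hΩo x ν hν _ _ hw
      (fun r hr => bump_test Ω (W a) (hint a) x r hr)
    have h0' : ∑ i, W a i x * ν i = 0 := by
      rw [← h0, PiLp.inner_apply]
      exact Finset.sum_congr rfl fun i _ => by simp [mul_comm]
    have hcont : Continuous (fun y => ∑ i, W a i y * ν i) :=
      continuous_finsetSum _ fun i _ => (hWL a i).continuous.mul continuous_const
    have ht := (hcont.tendsto x).mono_left (nhdsWithin_le_nhds (s := Ω))
    rw [h0'] at ht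
    refine ht.congr' ?_
    filter_upwards [self_mem_nhdsWithin] with y hy
    refine Finset.sum_congr rfl fun i _ => ?_
    have := hWE a i hy
    simp only at this
    rw [this]
end

section
/- Let Ω ⊂ ℝⁿ be a bounded Lipschitz domain, let f ∈ C¹([0,∞)) be convex with f(0) = f'(0) = 0 and of linear growth νt − L ≤ f(t) ≤ L(t+1) for all t ≥ 0, and let T₀ ∈ L^∞(Ω;ℝ^{N×n}) satisfy ‖T₀‖_{L^∞(Ω;ℝ^{N×n})} < f^∞(1). Then there exists R₀ > 0, depending only on f and T₀, such that for every w ∈ W^{1,1}(Ω;ℝ^N) one has 𝔉[w] ≥ ½(f^∞(1) − ‖T₀‖_{L^∞(Ω;ℝ^{N×n})}) ‖∇w‖_{L¹(Ω;ℝ^{N×n})} − f^∞(1)|Ω|R₀. In particular, if (w_k) is a sequence in W^{1,1}(Ω;ℝ^N) with (w_k)_Ω = 0 for all k and ‖w_k‖_{W^{1,1}(Ω;ℝ^N)} → ∞ as k → ∞, then 𝔉[w_k] → ∞. -/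
open MeasureTheory Filter Topology Set
open scoped ENNReal RealInnerProductSpace

theorem vol_image_le {n : ℕ} {K : NNReal} {f : EVec n → EVec n} {s : Set (EVec n)}
    (hf : LipschitzOnWith K f s) : volume (f '' s) ≤ (K : ℝ≥0∞) ^ n * volume s := by
  have h0 : (Measure.hausdorffMeasure (n : ℝ) : Measure (EVec n)).IsAddHaarMeasure := by
    simpa using MeasureTheory.isAddHaarMeasure_hausdorffMeasure (E := EVec n)
  have h1 := hf.hausdorffMeasure_image_le (d := (n : ℝ)) (by positivity)
  have h2 := Measure.isAddLeftInvariant_eq_smul (volume : Measure (EVec n)) (Measure.hausdorffMeasure (n : ℝ))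
  rw [h2]
  simp only [Measure.smul_apply, ENNReal.smul_def, smul_eq_mul]
  simp only [ENNReal.rpow_natCast] at h1
  calc _ ≤ _ := mul_le_mul_right h1 _
    _ = _ := by ring

theorem vol_image_null {n : ℕ} {K : NNReal} {f : EVec n → EVec n} {s : Set (EVec n)}
    (hf : LipschitzOnWith K f s) (hs : volume s = 0) : volume (f '' s) = 0 := by
  have := vol_image_le hf
  rw [hs, mul_zero] at this
  exact le_antisymm this bot_le

theorem lip_glue {n : ℕ} {C : NNReal} {r : ℝ} (hr : 0 < r) {g : EVec n → EVec n} [Nontrivial (EVec n)]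
    (hg : LipschitzOnWith C g (Metric.closedBall 0 r)) (h0 : ∀ x, ‖x‖ = r → g x = 0) :
    LipschitzWith C (fun x => (Metric.closedBall 0 r).indicator g x) := by
  have key : ∀ x : EVec n, ‖x‖ ≤ r → ‖g x‖ ≤ C * (r - ‖x‖) := by
    intro x hx
    obtain ⟨z, hz, hxz⟩ : ∃ z : EVec n, ‖z‖ = r ∧ dist x z = r - ‖x‖ := by
      by_cases hx0 : x = 0
      · obtain ⟨z, hz⟩ := exists_norm_eq (EVec n) hr.le
        exact ⟨z, hz, by simp [hx0, hz]⟩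
      · have hp : 0 < ‖x‖ := norm_pos_iff.2 hx0
        refine ⟨(r / ‖x‖) • x, ?_, ?_⟩
        · rw [norm_smul, Real.norm_of_nonneg (by positivity)]; field_simp
        · rw [dist_comm, dist_eq_norm]
          have : (r / ‖x‖) • x - x = ((r - ‖x‖) / ‖x‖) • x := by
            rw [sub_div, div_self hp.ne', sub_smul, one_smul]
          rw [this, norm_smul, Real.norm_of_nonneg (div_nonneg (by linarith) hp.le)]; field_simp
    have := hg.dist_le_mul x (by simpa using hx) z (by simp [hz])
    rw [h0 z hz, hxz] at this
    simpa using this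
  refine LipschitzWith.of_dist_le_mul fun x y => ?_
  have aux : ∀ x y : EVec n, ‖x‖ ≤ r → r < ‖y‖ → ‖g x‖ ≤ C * dist x y := by
    intro x y hx hy
    refine (key x hx).trans (mul_le_mul_of_nonneg_left ?_ C.2)
    have := norm_sub_norm_le y x
    rw [dist_comm, dist_eq_norm]; linarith
  by_cases hx : ‖x‖ ≤ r <;> by_cases hy : ‖y‖ ≤ r
  · simp only [mem_closedBall_zero_iff, hx, hy, indicator_of_mem]
    exact hg.dist_le_mul x (by simpa using hx) y (by simpa using hy)
  · have := aux x y hx (not_le.1 hy)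
    simpa [indicator, hx, hy] using this
  · have := aux y x hy (not_le.1 hx)
    rw [dist_comm] at this
    simpa [indicator, hx, hy] using this
  · simp [indicator, hx, hy]
    positivity

/-- Lagrange weights. -/
theorem lagrange_weights (n : ℕ) (δ : ℝ) (hδ : 0 < δ) : ∃ (t : Fin (n+1) → ℝ) (c : Fin (n+1) → ℝ),
    (∀ i, 0 < t i ∧ t i < δ) ∧ ∀ p : Polynomial ℝ, p.natDegree ≤ n →
      p.eval 1 = ∑ i, c i * p.eval (t i) := by
  let t : Fin (n+1) → ℝ := fun i => δ / ((i : ℝ) + 2)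
  have hinj : Function.Injective t := by
    intro i j hij
    simp only [t] at hij
    have hi : (0:ℝ) < (i : ℝ) + 2 := by positivity
    have hj : (0:ℝ) < (j : ℝ) + 2 := by positivity
    rw [div_eq_div_iff hi.ne' hj.ne'] at hij
    have := mul_left_cancel₀ hδ.ne' hij
    have h2 : (i : ℝ) = j := by linarith
    exact Fin.ext (by exact_mod_cast h2)
  refine ⟨t, fun i => (Lagrange.basis Finset.univ t i).eval 1, fun i => ⟨by positivity, ?_⟩, ?_⟩
  · simp only [t]
    rw [div_lt_iff₀ (by positivity)]
    have : (0:ℝ) ≤ (i:ℝ) := by positivity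
    nlinarith
  · intro p hp
    have := Lagrange.eq_interpolate (s := Finset.univ) (v := t) (f := p) (hinj.injOn) (by
      rw [Finset.card_fin]
      exact lt_of_le_of_lt (Polynomial.degree_le_of_natDegree_le hp) (by exact_mod_cast Nat.lt_succ_self n))
    conv_lhs => rw [this]
    rw [Lagrange.interpolate_apply, Polynomial.eval_finsetSum]
    refine Finset.sum_congr rfl fun i _ => ?_
    simp [mul_comm]

theorem det_poly {n : ℕ} (A : EVec n →L[ℝ] EVec n) : ∃ p : Polynomial ℝ, p.natDegree ≤ n ∧
    ∀ t : ℝ, p.eval t = (ContinuousLinearMap.id ℝ (EVec n) + t • A).det := by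
  let b := (EuclideanSpace.basisFun (Fin n) ℝ).toBasis
  let M := LinearMap.toMatrix b b (A : EVec n →ₗ[ℝ] EVec n)
  refine ⟨Matrix.det ((Polynomial.X : Polynomial ℝ) • M.map Polynomial.C + (1 : Matrix (Fin n) (Fin n) ℝ).map Polynomial.C), ?_, ?_⟩
  · simpa using Polynomial.natDegree_det_X_add_C_le M 1
  · intro t
    rw [← Polynomial.coe_evalRingHom, RingHom.map_det]
    have : (ContinuousLinearMap.id ℝ (EVec n) + t • A).det
        = LinearMap.det (LinearMap.id + t • (A : EVec n →ₗ[ℝ] EVec n)) := rfl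
    have h2 : LinearMap.toMatrix b b (LinearMap.id + t • (A : EVec n →ₗ[ℝ] EVec n)) = 1 + t • M := by
      rw [map_add, map_smul, LinearMap.toMatrix_id]
    rw [this, ← LinearMap.det_toMatrix b, h2]
    congr 1
    ext i j
    by_cases hij : i = j <;> (simp [hij, add_comm]; exact mul_comm _ _)

/-- small perturbation of the identity -/
theorem small_pert {n : ℕ} {C : NNReal} {R : ℝ} {g : EVec n → EVec n}
    (hg : LipschitzWith C g) (h0 : ∀ x, R ≤ ‖x‖ → g x = 0) {t : ℝ} (ht : 0 ≤ t) (htC : t * C < 1) :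
    InjOn (fun x => x + t • g x) univ ∧ (fun x => x + t • g x) '' Metric.ball 0 R = Metric.ball 0 R := by
  have hinj : Function.Injective (fun x => x + t • g x) := by
    intro x y hxy
    simp only at hxy
    have h1 : x - y = t • (g y - g x) := by
      rw [smul_sub]; rw [sub_eq_sub_iff_add_eq_add, hxy]; abel
    have h2 : ‖x - y‖ ≤ t * C * ‖x - y‖ := by
      conv_lhs => rw [h1]
      rw [norm_smul, Real.norm_of_nonneg ht, mul_assoc]
      refine mul_le_mul_of_nonneg_left ?_ ht
      rw [← dist_eq_norm, ← dist_eq_norm, dist_comm x y]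
      exact hg.dist_le_mul _ _
    have h3 : ‖x - y‖ = 0 := by nlinarith [norm_nonneg (x - y)]
    exact sub_eq_zero.1 (norm_eq_zero.1 h3)
  have hsurj : Function.Surjective (fun x => x + t • g x) := by
    intro y
    let T : NNReal := ⟨t, ht⟩
    have hl : LipschitzWith (T * C) (fun x => y - t • g x) := by
      refine LipschitzWith.of_dist_le_mul fun a b => ?_
      rw [dist_sub_left, dist_smul₀, Real.norm_of_nonneg ht]
      push_cast
      rw [mul_assoc]
      exact mul_le_mul_of_nonneg_left (hg.dist_le_mul _ _) ht
    have hc : ContractingWith (T * C) (fun x => y - t • g x) := ⟨by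
      rw [← NNReal.coe_lt_coe]; push_cast; exact htC, hl⟩
    refine ⟨hc.fixedPoint, ?_⟩
    have := hc.fixedPoint_isFixedPt
    simp only [Function.IsFixedPt] at this
    simp only
    nth_rw 1 [← this]
    simp
  refine ⟨hinj.injOn, ?_⟩
  apply Subset.antisymm
  · rintro _ ⟨x, hx, rfl⟩
    by_contra hcon
    simp only [mem_ball_zero_iff, not_lt] at hcon hx
    have h1 := h0 _ hcon
    have h2 : x + t • g x = x := hinj (by simp only; rw [h1]; simp)
    rw [h2] at hcon
    linarith
  · intro y hy
    obtain ⟨x, rfl⟩ := hsurj y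
    refine ⟨x, ?_, rfl⟩
    by_contra hcon
    simp only [mem_ball_zero_iff, not_lt] at hcon hy
    simp only [h0 x hcon, smul_zero, add_zero] at hy
    linarith

theorem int_det_small {n : ℕ} {C : NNReal} {R : ℝ} {g : EVec n → EVec n}
    (hg : LipschitzWith C g) (h0 : ∀ x, R ≤ ‖x‖ → g x = 0) :
    ∃ δ : ℝ, 0 < δ ∧ ∀ t : ℝ, 0 < t → t < δ →
      IntegrableOn (fun x => (ContinuousLinearMap.id ℝ (EVec n) + t • fderiv ℝ g x).det) (Metric.ball 0 R) ∧
      ∫ x in Metric.ball 0 R, (ContinuousLinearMap.id ℝ (EVec n) + t • fderiv ℝ g x).det =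
        (volume (Metric.ball (0 : EVec n) R)).toReal := by
  have hcont : Continuous (fun A : EVec n →L[ℝ] EVec n => (ContinuousLinearMap.id ℝ (EVec n) + A).det) :=
    ContinuousLinearMap.continuous_det.comp (continuous_const.add continuous_id)
  have hpos : ∀ᶠ A : EVec n →L[ℝ] EVec n in 𝓝 0, 0 < (ContinuousLinearMap.id ℝ (EVec n) + A).det := by
    apply hcont.continuousAt.eventually_const_lt
    simp [ContinuousLinearMap.det]
  obtain ⟨ε, hε, hball⟩ := Metric.eventually_nhds_iff.1 hpos
  refine ⟨min (1 / (C + 1)) (ε / (C + 1)), lt_min (by positivity) (by positivity), fun t ht htδ => ?_⟩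
  have ht1 : t * (C + 1) < 1 := (lt_div_iff₀ (by positivity)).1 (htδ.trans_le (min_le_left _ _))
  have ht2 : t * (C + 1) < ε := (lt_div_iff₀ (by positivity)).1 (htδ.trans_le (min_le_right _ _))
  have hdetpos : ∀ x, 0 < (ContinuousLinearMap.id ℝ (EVec n) + t • fderiv ℝ g x).det := by
    intro x
    apply hball
    rw [dist_zero_right, norm_smul, Real.norm_of_nonneg ht.le]
    have := norm_fderiv_le_of_lipschitz ℝ hg (x₀ := x)
    nlinarith
  have hC0 : (0:ℝ) ≤ C := C.2
  obtain ⟨hinj, himg⟩ := small_pert hg h0 ht.le (by nlinarith)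
  set s := Metric.ball (0 : EVec n) R ∩ {x | DifferentiableAt ℝ g x} with hs
  have hsm : MeasurableSet s := measurableSet_ball.inter (measurableSet_of_differentiableAt ℝ g)
  have hnull : volume {x | ¬ DifferentiableAt ℝ g x} = 0 := hg.ae_differentiableAt
  have hLip : LipschitzWith (1 + ⟨t, ht.le⟩ * C) (fun x => x + t • g x) := by
    refine LipschitzWith.of_dist_le_mul fun a b => ?_
    have h1 := dist_add_add_le a (t • g a) b (t • g b)
    have h2 : dist (t • g a) (t • g b) ≤ t * (C * dist a b) := by
      rw [dist_smul₀, Real.norm_of_nonneg ht.le]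
      exact mul_le_mul_of_nonneg_left (hg.dist_le_mul _ _) ht.le
    push_cast
    change _ ≤ (1 + t * C) * _
    linarith
  have hvol : volume ((fun x => x + t • g x) '' s) = volume (Metric.ball (0 : EVec n) R) := by
    apply le_antisymm
    · conv_rhs => rw [← himg]
      exact measure_mono (image_mono inter_subset_left)
    · conv_lhs => rw [← himg]
      have : Metric.ball (0 : EVec n) R ⊆ s ∪ {x | ¬ DifferentiableAt ℝ g x} := by
        intro x hx
        by_cases hd : DifferentiableAt ℝ g x
        · exact Or.inl ⟨hx, hd⟩
        · exact Or.inr hd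
      refine (measure_mono (image_mono this)).trans ?_
      rw [image_union]
      refine (measure_union_le _ _).trans ?_
      rw [vol_image_null (hLip.lipschitzOnWith) hnull, add_zero]
  have hjac := lintegral_abs_det_fderiv_eq_addHaar_image volume hsm
    (f := fun x => x + t • g x) (f' := fun x => ContinuousLinearMap.id ℝ (EVec n) + t • fderiv ℝ g x)
    (fun x hx => ((hasFDerivAt_id x).add (hx.2.hasFDerivAt.const_smul t)).hasFDerivWithinAt)
    (hinj.mono (subset_univ _))
  rw [hvol] at hjac
  have hae : s =ᵐ[volume] Metric.ball (0 : EVec n) R := by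
    rw [hs]
    exact inter_ae_eq_left_of_ae_eq_univ (eventuallyEq_univ.2 hg.ae_differentiableAt)
  rw [setLIntegral_congr hae] at hjac
  simp_rw [abs_of_pos (hdetpos _)] at hjac
  have hmeas : Measurable (fun x => (ContinuousLinearMap.id ℝ (EVec n) + t • fderiv ℝ g x).det) :=
    (hcont.measurable).comp ((measurable_fderiv ℝ g).const_smul t)
  have hint : IntegrableOn (fun x => (ContinuousLinearMap.id ℝ (EVec n) + t • fderiv ℝ g x).det) (Metric.ball 0 R) := by
    refine ⟨hmeas.aestronglyMeasurable, ?_⟩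
    rw [hasFiniteIntegral_iff_ofReal (ae_of_all _ fun x => (hdetpos x).le), hjac]
    exact measure_ball_lt_top
  refine ⟨hint, ?_⟩
  rw [integral_eq_lintegral_of_nonneg_ae (ae_of_all _ fun x => (hdetpos x).le) hmeas.aestronglyMeasurable, hjac]

theorem int_det {n : ℕ} {C : NNReal} {R : ℝ} {g : EVec n → EVec n}
    (hg : LipschitzWith C g) (h0 : ∀ x, R ≤ ‖x‖ → g x = 0) :
      ∫ x in Metric.ball 0 R, (ContinuousLinearMap.id ℝ (EVec n) + fderiv ℝ g x).det =
        (volume (Metric.ball (0 : EVec n) R)).toReal := by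
  obtain ⟨δ, hδ, hsm⟩ := int_det_small hg h0
  obtain ⟨t, c, ht, hp⟩ := lagrange_weights n δ hδ
  have h1 : ∀ A : EVec n →L[ℝ] EVec n, (ContinuousLinearMap.id ℝ (EVec n) + A).det =
      ∑ i, c i * (ContinuousLinearMap.id ℝ (EVec n) + t i • A).det := by
    intro A
    obtain ⟨p, hpn, hpe⟩ := det_poly A
    have := hp p hpn
    simpa [hpe] using this
  have h2 : ∑ i, c i = 1 := by
    have := hp 1 (by simp)
    simpa using this.symm
  have h3 : (fun x => (ContinuousLinearMap.id ℝ (EVec n) + fderiv ℝ g x).det) =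
      fun x => ∑ i, c i * (ContinuousLinearMap.id ℝ (EVec n) + t i • fderiv ℝ g x).det :=
    funext fun x => h1 _
  rw [h3, integral_finsetSum _ (fun i _ => ((hsm (t i) (ht i).1 (ht i).2).1).const_mul _)]
  simp_rw [integral_const_mul, (hsm (t _) (ht _).1 (ht _).2).2]
  rw [← Finset.sum_mul, h2, one_mul]

theorem normalize_lip {E : Type*} [NormedAddCommGroup E] [NormedSpace ℝ E] (v w : E) (a b M : ℝ) (hv : v ≠ 0) (hw : w ≠ 0)
    (hb : 0 ≤ b) (hbM : b ≤ M * ‖w‖) : ‖(a / ‖v‖) • v - (b / ‖w‖) • w‖ ≤ |a - b| + 2 * M * ‖v - w‖ := by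
  have hv' : 0 < ‖v‖ := norm_pos_iff.2 hv
  have hw' : 0 < ‖w‖ := norm_pos_iff.2 hw
  have e : (a / ‖v‖) • v - (b / ‖w‖) • w = ((a - b) / ‖v‖) • v + (b / ‖w‖) • (((‖w‖ - ‖v‖) / ‖v‖) • v + (v - w)) := by
    rw [smul_add, smul_smul, smul_sub]
    have : (a / ‖v‖) = (a - b) / ‖v‖ + (b / ‖w‖ * ((‖w‖ - ‖v‖) / ‖v‖)) + b / ‖w‖ := by field_simp; ring
    rw [this, add_smul, add_smul]; abel
  rw [e]
  have n1 : ‖((a - b) / ‖v‖) • v‖ = |a - b| := by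
    rw [norm_smul, norm_div, norm_norm, Real.norm_eq_abs]; field_simp
  have n2 : ‖((‖w‖ - ‖v‖) / ‖v‖) • v‖ ≤ ‖v - w‖ := by
    rw [norm_smul, norm_div, norm_norm, Real.norm_eq_abs, div_mul_cancel₀ _ hv'.ne', abs_sub_comm]
    exact abs_norm_sub_norm_le v w
  have hq : b / ‖w‖ ≤ M := (div_le_iff₀ hw').2 hbM
  have hq0 : 0 ≤ b / ‖w‖ := by positivity
  calc _ ≤ |a - b| + ‖(b / ‖w‖) • (((‖w‖ - ‖v‖) / ‖v‖) • v + (v - w))‖ := by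
        rw [← n1]; exact norm_add_le _ _
    _ ≤ |a - b| + (b / ‖w‖) * (‖v - w‖ + ‖v - w‖) := by
        rw [norm_smul, Real.norm_of_nonneg hq0]
        gcongr
        exact (norm_add_le _ _).trans (by gcongr)
    _ ≤ _ := by nlinarith [norm_nonneg (v - w)]

theorem exists_zero {n : ℕ} [Nontrivial (EVec n)] {C : NNReal} {R : ℝ} (hR : 0 < R) {F : EVec n → EVec n}
    (hF : LipschitzWith C F) (h0 : ∀ x, R ≤ ‖x‖ → F x = x) : ∃ x, F x = 0 := by
  by_contra! hne
  obtain ⟨c, hc, hcF⟩ : ∃ c > 0, ∀ x ∈ Metric.closedBall (0 : EVec n) R, c ≤ ‖F x‖ := by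
    obtain ⟨z, hz, hmin⟩ := (isCompact_closedBall (0 : EVec n) R).exists_isMinOn
      ⟨0, by simp [hR.le]⟩ (hF.continuous.norm.continuousOn)
    exact ⟨‖F z‖, norm_pos_iff.2 (hne z), fun x hx => hmin hx⟩
  let a : EVec n → ℝ := fun x => max R ‖x‖
  let Ft : EVec n → EVec n := fun x => (a x / ‖F x‖) • F x
  let M : ℝ := max 1 (R / c)
  have hM1 : 1 ≤ M := le_max_left _ _
  have haM : ∀ x, a x ≤ M * ‖F x‖ := by
    intro x
    by_cases hx : ‖x‖ ≤ R
    · have h1 := hcF x (by simpa using hx)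
      simp only [a, max_eq_left hx]
      calc R = R / c * c := by field_simp
        _ ≤ M * ‖F x‖ := by gcongr; exact le_max_right _ _
    · have hx := (not_le.1 hx).le
      simp only [a, max_eq_right hx, h0 x hx]
      nlinarith [norm_nonneg x]
  have hFtid : ∀ x, R ≤ ‖x‖ → Ft x = x := by
    intro x hx
    have : 0 < ‖x‖ := by linarith
    simp only [Ft, a, h0 x hx, max_eq_right hx, div_self this.ne', one_smul]
  have hFtn : ∀ x ∈ Metric.ball (0 : EVec n) R, ‖Ft x‖ = R := by
    intro x hx
    have hx : ‖x‖ ≤ R := by simpa using (mem_ball_zero_iff.1 hx).le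
    have : 0 < ‖F x‖ := norm_pos_iff.2 (hne x)
    simp only [Ft, a, norm_smul, max_eq_left hx, norm_div, norm_norm, Real.norm_of_nonneg hR.le]
    field_simp
  have hFtL : ∃ K : NNReal, LipschitzWith K Ft := by
    refine ⟨⟨1 + 2 * M * C, by positivity⟩, LipschitzWith.of_dist_le_mul fun x y => ?_⟩
    rw [dist_eq_norm]
    refine (normalize_lip (F x) (F y) (a x) (a y) M (hne x) (hne y) (hR.le.trans (le_max_left _ _)) (haM y)).trans ?_
    have h1 : |a x - a y| ≤ dist x y := by
      rw [dist_eq_norm]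
      refine (abs_max_sub_max_le_max R ‖x‖ R ‖y‖).trans ?_
      simp [abs_norm_sub_norm_le]
    have h2 := hF.dist_le_mul x y
    rw [dist_eq_norm] at h2
    change _ ≤ (1 + 2 * M * C) * dist x y
    nlinarith
  obtain ⟨K, hK⟩ := hFtL
  have hgL : LipschitzWith (K + 1) (fun x => Ft x - x) := hK.sub LipschitzWith.id
  have hint := int_det hgL (R := R) (fun x hx => by simp [hFtid x hx])
  have hz : ∫ x in Metric.ball 0 R, (ContinuousLinearMap.id ℝ (EVec n) + fderiv ℝ (fun x => Ft x - x) x).det = 0 := by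
    apply setIntegral_eq_zero_of_ae_eq_zero
    filter_upwards [hK.ae_differentiableAt] with x hd hx
    have e : ContinuousLinearMap.id ℝ (EVec n) + fderiv ℝ (fun x => Ft x - x) x = fderiv ℝ Ft x := by
      rw [fderiv_fun_sub hd differentiableAt_fun_id, fderiv_fun_id]; simp
    rw [e]
    by_contra hdet
    have hsurj : Function.Surjective (fderiv ℝ Ft x) := by
      have hu : IsUnit (LinearMap.det (fderiv ℝ Ft x : EVec n →ₗ[ℝ] EVec n)) := isUnit_iff_ne_zero.2 hdet
      exact ((Module.End.isUnit_iff _).1 ((LinearMap.isUnit_iff_isUnit_det _).2 hu)).2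
    have hconst : (fun y => ‖Ft y‖ ^ 2) =ᶠ[𝓝 x] fun _ => R ^ 2 := by
      filter_upwards [Metric.isOpen_ball.mem_nhds hx] with y hy
      rw [hFtn y hy]
    have h1 : HasFDerivAt (fun y => ‖Ft y‖ ^ 2) _ x := hd.hasFDerivAt.norm_sq
    have h2 := h1.congr_of_eventuallyEq hconst.symm
    have h3 := h2.unique (hasFDerivAt_const (R^2) x)
    obtain ⟨v, hv⟩ := hsurj (Ft x)
    have h4 := congrArg (fun L => L v) h3
    simp [hv] at h4
    have := hFtn x hx
    rw [h4] at this
    simp at this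
    linarith
  rw [hz] at hint
  have : 0 < (volume (Metric.ball (0 : EVec n) R)).toReal :=
    ENNReal.toReal_pos (Metric.measure_ball_pos _ _ hR).ne' measure_ball_lt_top.ne
  linarith

theorem exists_zero_ball {n : ℕ} [Nontrivial (EVec n)] {C : NNReal} {r : ℝ} (hr : 0 < r) {F : EVec n → EVec n}
    (hF : LipschitzOnWith C F (Metric.closedBall 0 r))
    (hd : ∀ x, ‖x‖ ≤ r → ‖F x - x‖ ≤ r / 4) : ∃ x, ‖x‖ ≤ r ∧ F x = 0 := by
  let η : EVec n → ℝ := fun x => min 1 (2 - 2 * ‖x‖ / r)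
  let g : EVec n → EVec n := fun x => η x • (F x - x)
  have hη0 : ∀ x, ‖x‖ ≤ r → 0 ≤ η x := by
    intro x hx
    refine le_min zero_le_one ?_
    have : 2 * ‖x‖ / r ≤ 2 := by rw [div_le_iff₀ hr]; linarith
    linarith
  have hη1 : ∀ x, η x ≤ 1 := fun x => min_le_left _ _
  have hηL : ∀ x y, |η x - η y| ≤ 2 / r * ‖x - y‖ := by
    intro x y
    refine (abs_min_sub_min_le_max _ _ _ _).trans ?_
    have : (2 - 2 * ‖x‖ / r) - (2 - 2 * ‖y‖ / r) = 2 / r * (‖y‖ - ‖x‖) := by ring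
    rw [this, abs_mul, abs_of_pos (by positivity : 0 < 2 / r)]
    simp only [sub_self, abs_zero]
    refine max_le (by positivity) ?_
    gcongr
    rw [norm_sub_rev]
    exact abs_norm_sub_norm_le y x
  have hgL : LipschitzOnWith (C + 2) g (Metric.closedBall 0 r) := by
    refine LipschitzOnWith.of_dist_le_mul fun x hx y hy => ?_
    have hx' : ‖x‖ ≤ r := by simpa using hx
    have hy' : ‖y‖ ≤ r := by simpa using hy
    have e : g x - g y = (η x - η y) • (F x - x) + η y • ((F x - F y) - (x - y)) := by
      simp only [g, sub_smul, smul_sub]; abel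
    rw [dist_eq_norm, e]
    have h1 : ‖(η x - η y) • (F x - x)‖ ≤ ‖x - y‖ := by
      rw [norm_smul, Real.norm_eq_abs]
      calc _ ≤ (2 / r * ‖x - y‖) * (r / 4) := mul_le_mul (hηL x y) (hd x hx') (norm_nonneg _) (by positivity)
        _ = ‖x - y‖ / 2 := by field_simp; ring
        _ ≤ _ := by linarith [norm_nonneg (x - y)]
    have h2 : ‖η y • ((F x - F y) - (x - y))‖ ≤ C * ‖x - y‖ + ‖x - y‖ := by
      rw [norm_smul, Real.norm_of_nonneg (hη0 y hy')]
      have := hF.dist_le_mul x hx y hy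
      rw [dist_eq_norm, dist_eq_norm] at this
      have h3 := norm_sub_le (F x - F y) (x - y)
      have h4 := hη1 y
      have h5 := hη0 y hy'
      nlinarith [norm_nonneg ((F x - F y) - (x - y))]
    have := norm_add_le ((η x - η y) • (F x - x)) (η y • ((F x - F y) - (x - y)))
    rw [dist_eq_norm]
    push_cast
    linarith
  have hg0 : ∀ x, ‖x‖ = r → g x = 0 := by
    intro x hx
    have : η x = 0 := by
      simp only [η, hx]
      rw [mul_div_cancel_right₀ _ hr.ne']; norm_num
    simp [g, this]
  have hGl := lip_glue hr hgL hg0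
  have hLip : LipschitzWith (1 + (C + 2)) (fun x => x + (Metric.closedBall 0 r).indicator g x) :=
    LipschitzWith.id.add hGl
  obtain ⟨x, hx⟩ := exists_zero hr hLip (by
    intro x hx
    rcases hx.eq_or_lt with h | h
    · simp [indicator, hg0 x h.symm]
    · simp [indicator, h])
  have hxr : ‖x‖ ≤ r := by
    by_contra hcon
    have : x = 0 := by simpa [indicator, hcon] using hx
    rw [this] at hcon; simp at hcon; linarith
  have hx2 : x + g x = 0 := by simpa [indicator, hxr] using hx
  refine ⟨x, hxr, ?_⟩
  by_cases hh : ‖x‖ ≤ r / 2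
  · have : η x = 1 := by
      simp only [η]
      apply min_eq_left
      have : 2 * ‖x‖ / r ≤ 1 := by rw [div_le_iff₀ hr]; linarith
      linarith
    simpa [g, this] using hx2
  · exfalso
    have h1 : ‖x‖ = ‖g x‖ := by
      have := congrArg norm (eq_neg_of_add_eq_zero_left hx2)
      rwa [norm_neg] at this
    have h2 : ‖g x‖ ≤ r / 4 := by
      simp only [g, norm_smul, Real.norm_of_nonneg (hη0 x hxr)]
      nlinarith [hd x hxr, hη0 x hxr, hη1 x, norm_nonneg (F x - x)]
    push Not at hh
    linarith

theorem image_ball_nhds {n : ℕ} [Nontrivial (EVec n)] {K : NNReal} {r : ℝ} (hr : 0 < r)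
    {h hinv : EVec n → EVec n} {x₀ : EVec n}
    (hh : LipschitzOnWith K h (Metric.closedBall x₀ r))
    (hi : LipschitzOnWith K hinv (h '' Metric.closedBall x₀ r))
    (hl : ∀ x ∈ Metric.closedBall x₀ r, hinv (h x) = x) :
    h '' Metric.closedBall x₀ r ∈ 𝓝 (h x₀) := by
  by_contra hcon
  set B := Metric.closedBall x₀ r with hB
  have hx0B : x₀ ∈ B := Metric.mem_closedBall_self hr.le
  have hcomp : IsCompact (h '' B) := (isCompact_closedBall x₀ r).image_of_continuousOn hh.continuousOn
  obtain ⟨G, hGL, hGeq⟩ := hi.extend_finite_dimension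
  set Lg := lipschitzExtensionConstant (EVec n) * K with hLg
  obtain ⟨ε, hε, hεL⟩ : ∃ ε : ℝ, 0 < ε ∧ Lg * ε ≤ r / 8 := by
    refine ⟨r / (8 * (Lg + 1)), by positivity, ?_⟩
    have h0 : (0:ℝ) ≤ Lg := Lg.2
    rw [mul_div_assoc', div_le_div_iff₀ (by positivity) (by positivity)]
    nlinarith
  obtain ⟨c, hc, hcB⟩ : ∃ c, dist c (h x₀) < ε / 2 ∧ c ∉ h '' B := by
    rw [Metric.mem_nhds_iff] at hcon
    push Not at hcon
    have := hcon (ε / 2) (by positivity)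
    rw [not_subset] at this
    obtain ⟨c, h1, h2⟩ := this
    exact ⟨c, h1, h2⟩
  -- lower distance
  obtain ⟨d, hd, hdB⟩ : ∃ d > 0, ∀ y ∈ h '' B, d ≤ ‖y - c‖ := by
    obtain ⟨z, hz, hmin⟩ := hcomp.exists_isMinOn ⟨h x₀, mem_image_of_mem _ hx0B⟩
      (f := fun y => ‖y - c‖) (by fun_prop)
    refine ⟨‖z - c‖, norm_pos_iff.2 (sub_ne_zero.2 ?_), fun x hx => hmin hx⟩
    rintro rfl; exact hcB hz
  let m : ℝ := ε / (2 * (K + 1))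
  have hm : 0 < m := by positivity
  have hS : volume (G '' Metric.sphere c ε) = 0 :=
    vol_image_null hGL.lipschitzOnWith (Measure.addHaar_sphere _ _ _)
  obtain ⟨p, hp, hpS⟩ : ∃ p, p ∈ Metric.ball x₀ (min m (r / 8)) ∧ p ∉ G '' Metric.sphere c ε := by
    by_contra! hall
    have h1 : volume (Metric.ball x₀ (min m (r / 8))) ≤ 0 := hS ▸ measure_mono hall
    exact (Metric.measure_ball_pos volume x₀ (lt_min hm (by positivity))).not_ge h1
  have hp1 : ‖p - x₀‖ < m := by
    rw [← dist_eq_norm]; exact (Metric.mem_ball.1 hp).trans_le (min_le_left _ _)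
  have hp2 : ‖p - x₀‖ < r / 8 := by
    rw [← dist_eq_norm]; exact (Metric.mem_ball.1 hp).trans_le (min_le_right _ _)
  let Φ : EVec n → EVec n := fun y => c + (max ε ‖y - c‖ / ‖y - c‖) • (y - c)
  let M : ℝ := max 1 (ε / d)
  have hΦL : LipschitzOnWith ⟨1 + 2 * M, by positivity⟩ Φ (h '' B) := by
    refine LipschitzOnWith.of_dist_le_mul fun y hy z hz => ?_
    have hy1 := hdB y hy
    have hz1 := hdB z hz
    simp only [Φ]
    rw [dist_add_left, dist_eq_norm]
    refine (normalize_lip (y - c) (z - c) _ (max ε ‖z - c‖) M (norm_pos_iff.1 (by linarith))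
      (norm_pos_iff.1 (by linarith)) (hε.le.trans (le_max_left _ _)) ?_).trans ?_
    · apply max_le
      · calc ε = ε / d * d := by field_simp
          _ ≤ M * ‖z - c‖ := by gcongr; exact le_max_right _ _
      · have : 1 ≤ M := le_max_left _ _
        nlinarith [norm_nonneg (z - c)]
    · have e : y - c - (z - c) = y - z := by abel
      have h1 : |max ε ‖y - c‖ - max ε ‖z - c‖| ≤ ‖y - z‖ := by
        refine (abs_max_sub_max_le_max _ _ _ _).trans ?_
        have := abs_norm_sub_norm_le (y - c) (z - c)
        rw [e] at this
        simpa using this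
      rw [e, dist_eq_norm]
      change _ ≤ (1 + 2 * M) * ‖y - z‖
      linarith
  have hΦ1 : ∀ y ∈ h '' B, ε ≤ ‖y - c‖ → Φ y = y := by
    intro y hy hy2
    have : 0 < ‖y - c‖ := by linarith
    simp [Φ, max_eq_right hy2, div_self this.ne']
  have hΦ2 : ∀ y ∈ h '' B, ‖y - c‖ ≤ ε → Φ y ∈ Metric.sphere c ε := by
    intro y hy hy2
    have : 0 < ‖y - c‖ := hd.trans_le (hdB y hy)
    simp only [Φ, max_eq_left hy2, mem_sphere_iff_norm, add_sub_cancel_left, norm_smul, norm_div, norm_norm,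
      Real.norm_of_nonneg hε.le]
    field_simp
  have hΦ3 : ∀ y ∈ h '' B, ‖Φ y - y‖ ≤ ε := by
    intro y hy
    rcases le_total ε ‖y - c‖ with h1 | h1
    · rw [hΦ1 y hy h1]; simp [hε.le]
    · have hpos : 0 < ‖y - c‖ := hd.trans_le (hdB y hy)
      have e : Φ y - y = ((ε - ‖y - c‖) / ‖y - c‖) • (y - c) := by
        simp only [Φ, max_eq_left h1, sub_div, sub_smul, div_self hpos.ne', one_smul]; abel
      rw [e, norm_smul, Real.norm_of_nonneg (div_nonneg (by linarith) hpos.le), div_mul_cancel₀ _ hpos.ne']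
      linarith
  have hne : ∀ x ∈ B, G (Φ (h x)) ≠ p := by
    intro x hx heq
    have hy : h x ∈ h '' B := mem_image_of_mem _ hx
    rcases le_total ε ‖h x - c‖ with h1 | h1
    · rw [hΦ1 _ hy h1, ← hGeq hy, hl x hx] at heq
      rw [← heq] at hp1
      have h2 := hh.dist_le_mul x hx x₀ hx0B
      have h3 : ε / 2 ≤ dist (h x) (h x₀) := by
        have := dist_triangle (h x) (h x₀) c
        rw [dist_eq_norm (h x) c, dist_comm (h x₀) c] at this
        linarith
      rw [dist_eq_norm x x₀] at h2
      have h4 : m * (2 * (K + 1)) = ε := by simp only [m]; field_simp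
      have hK : (0:ℝ) ≤ K := K.2
      nlinarith [norm_nonneg (x - x₀)]
    · exact hpS ⟨_, hΦ2 _ hy h1, heq⟩
  -- centred map
  let F : EVec n → EVec n := fun v => G (Φ (h (x₀ + v))) - p
  have hmaps : MapsTo (fun v : EVec n => x₀ + v) (Metric.closedBall 0 r) B := by
    intro v hv
    simpa [hB] using hv
  have hFL : LipschitzOnWith (Lg * (⟨1 + 2 * M, by positivity⟩ * (K * 1))) F (Metric.closedBall 0 r) := by
    have h1 : LipschitzOnWith 1 (fun v : EVec n => x₀ + v) (Metric.closedBall 0 r) :=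
      (LipschitzWith.of_dist_le_mul fun a b => by simp).lipschitzOnWith
    have h2 := hGL.comp_lipschitzOnWith (hΦL.comp (hh.comp h1 hmaps) (fun v hv => mem_image_of_mem _ (hmaps hv)))
    refine LipschitzOnWith.of_dist_le_mul fun a ha b hb => ?_
    simp only [F, dist_sub_right]
    exact h2.dist_le_mul a ha b hb
  obtain ⟨v, hv, hFv⟩ := exists_zero_ball hr hFL (by
    intro v hv
    have hxB : x₀ + v ∈ B := hmaps (by simpa using hv)
    have hy : h (x₀ + v) ∈ h '' B := mem_image_of_mem _ hxB
    have e : F v - v = (G (Φ (h (x₀ + v))) - G (h (x₀ + v))) - (p - x₀) := by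
      rw [← hGeq hy, hl _ hxB]; simp only [F]; abel
    rw [e]
    refine (norm_sub_le _ _).trans ?_
    have h1 := hGL.dist_le_mul (Φ (h (x₀ + v))) (h (x₀ + v))
    rw [dist_eq_norm, dist_eq_norm] at h1
    have h2 := hΦ3 _ hy
    have h3 : (Lg:ℝ) * ‖Φ (h (x₀ + v)) - h (x₀ + v)‖ ≤ Lg * ε := mul_le_mul_of_nonneg_left h2 Lg.2
    linarith)
  exact hne _ (hmaps (by simpa using hv)) (sub_eq_zero.1 hFv)

theorem isOpen_image_bilip {n : ℕ} [Nontrivial (EVec n)] {K : NNReal} {U : Set (EVec n)} (hU : IsOpen U)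
    {h hinv : EVec n → EVec n}
    (hh : LipschitzOnWith K h U) (hi : LipschitzOnWith K hinv (h '' U))
    (hl : ∀ x ∈ U, hinv (h x) = x) : IsOpen (h '' U) := by
  rw [isOpen_iff_mem_nhds]
  rintro _ ⟨x, hx, rfl⟩
  obtain ⟨r, hr, hrU⟩ := Metric.nhds_basis_closedBall.mem_iff.1 (hU.mem_nhds hx)
  exact mem_of_superset (image_ball_nhds hr (hh.mono hrU) (hi.mono (image_mono hrU)) (fun x hx => hl x (hrU hx)))
    (image_mono hrU)

theorem path_aux {n : ℕ} {L : NNReal} {γ : ℝ → EVec n} (hγ : LipschitzWith L γ) {u : EVec n → ℝ}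
    (hu : ContDiff ℝ 1 u) : u (γ 1) - u (γ 0) ≤ L * ∫ t in (0:ℝ)..1, ‖fderiv ℝ u (γ t)‖ := by
  have hc : Continuous (fun t => ‖fderiv ℝ u (γ t)‖) :=
    ((hu.continuous_fderiv (by norm_num)).comp hγ.continuous).norm
  have key := image_le_of_liminf_slope_right_le_deriv_boundary (f := fun t => u (γ t)) (a := 0) (b := 1)
    (B := fun t => u (γ 0) + L * ∫ s in (0:ℝ)..t, ‖fderiv ℝ u (γ s)‖)
    (B' := fun t => L * ‖fderiv ℝ u (γ t)‖)
    ((hu.continuous.comp hγ.continuous).continuousOn) (by simp)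
    (by
      apply Continuous.continuousOn
      exact continuous_const.add (continuous_const.mul (intervalIntegral.continuous_primitive (fun a b => hc.intervalIntegrable a b) 0)))
    (by
      intro x hx
      have h1 := (intervalIntegral.integral_hasDerivAt_right (hc.intervalIntegrable 0 x)
        (hc.stronglyMeasurableAtFilter _ _) hc.continuousAt)
      exact ((h1.const_mul (L:ℝ)).const_add (u (γ 0))).hasDerivWithinAt)
    (by
      intro x hx r hr
      obtain ⟨K', hK1, hK2⟩ : ∃ K' : NNReal, ‖fderiv ℝ u (γ x)‖₊ < K' ∧ (K' : ℝ) * L < r := by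
        have hL : (0:ℝ) ≤ L := L.2
        set a := ‖fderiv ℝ u (γ x)‖ with ha
        have hd : 0 < (r - L * a) / (L + 1) := div_pos (by linarith) (by positivity)
        have ha0 : 0 ≤ a := norm_nonneg _
        refine ⟨Real.toNNReal (a + (r - L * a) / (L + 1)), ?_, ?_⟩
        · rw [← NNReal.coe_lt_coe, coe_nnnorm, Real.coe_toNNReal _ (by positivity)]; linarith
        · rw [Real.coe_toNNReal _ (by positivity)]
          have : (r - L * a) / (L + 1) * (L + 1) = r - L * a := by field_simp
          nlinarith
      obtain ⟨s, hs, hlip⟩ := (hu.contDiffAt.hasStrictFDerivAt (by norm_num)).exists_lipschitzOnWith_of_nnnorm_lt K' hK1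
      have h1 : ∀ᶠ z in 𝓝[>] x, γ z ∈ s := (hγ.continuous.continuousAt.continuousWithinAt.eventually hs)
      refine Eventually.frequently ?_
      filter_upwards [h1, self_mem_nhdsWithin] with z hz hxz
      have hxz : x < z := hxz
      rw [slope_def_field, div_lt_iff₀ (by linarith)]
      have h2 := hlip.dist_le_mul _ hz _ (mem_of_mem_nhds hs)
      have h3 := hγ.dist_le_mul z x
      rw [Real.dist_eq] at h2
      rw [Real.dist_eq, abs_of_pos (by linarith : 0 < z - x)] at h3
      have h4 := le_abs_self (u (γ z) - u (γ x))
      have h5 : (K':ℝ) * dist (γ z) (γ x) ≤ K' * (L * (z - x)) := mul_le_mul_of_nonneg_left h3 K'.2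
      nlinarith)
  have : u (γ 1) ≤ u (γ 0) + L * ∫ s in (0:ℝ)..1, ‖fderiv ℝ u (γ s)‖ := key (x := 1) (by simp)
  linarith

theorem path_enorm {n : ℕ} {L : NNReal} {γ : ℝ → EVec n} (hγ : LipschitzWith L γ) {u : EVec n → ℝ}
    (hu : ContDiff ℝ 1 u) : ‖u (γ 0) - u (γ 1)‖ₑ ≤ L * ∫⁻ t in Icc (0:ℝ) 1, ‖fderiv ℝ u (γ t)‖ₑ := by
  have hc : Continuous (fun t => ‖fderiv ℝ u (γ t)‖) :=
    ((hu.continuous_fderiv (by norm_num)).comp hγ.continuous).norm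
  have h1 := path_aux hγ hu
  have h2 := path_aux hγ hu.neg
  have h3 : ∀ x, fderiv ℝ (fun x => - u x) x = - fderiv ℝ u x := fun x => fderiv_fun_neg
  simp only [h3, norm_neg] at h2
  have h4 : ‖u (γ 0) - u (γ 1)‖ ≤ L * ∫ t in (0:ℝ)..1, ‖fderiv ℝ u (γ t)‖ := by
    rw [Real.norm_eq_abs, abs_le]; constructor <;> linarith
  rw [intervalIntegral.integral_of_le zero_le_one, ← integral_Icc_eq_integral_Ioc] at h4
  rw [← ofReal_norm]
  refine (ENNReal.ofReal_le_ofReal h4).trans ?_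
  rw [ENNReal.ofReal_mul (NNReal.coe_nonneg L), ofReal_integral_eq_lintegral_ofReal (hc.integrableOn_Icc) (ae_of_all _ fun _ => norm_nonneg _)]
  simp

theorem lint_affine {n : ℕ} {H : EVec n → ℝ≥0∞} (hH : Measurable H) {a : ℝ} (ha : 1 / 2 ≤ a) (b : EVec n) :
    ∫⁻ y, H (a • y + b) ≤ 2 ^ n * ∫⁻ y, H y := by
  have ha0 : a ≠ 0 := by linarith
  have h1 : ∫⁻ y, H (a • y + b) = ∫⁻ y, H (y + b) ∂(Measure.map (a • ·) (volume : Measure (EVec n))) := by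
    rw [lintegral_map (by fun_prop) (by fun_prop)]
  rw [h1, Measure.map_addHaar_smul _ ha0, lintegral_smul_measure, lintegral_add_right_eq_self]
  rw [smul_eq_mul]
  gcongr
  rw [finrank_euclideanSpace_fin]
  have : (2:ℝ≥0∞) ^ n = ENNReal.ofReal (2 ^ n) := by
    rw [ENNReal.ofReal_pow (by norm_num)]; simp
  rw [this]
  apply ENNReal.ofReal_le_ofReal
  rw [abs_of_nonneg (by positivity), ← inv_pow]
  have h2 : a⁻¹ ≤ 2 := by rw [inv_le_comm₀ (by linarith) (by norm_num)]; linarith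
  exact pow_le_pow_left₀ (inv_nonneg.2 (by linarith)) h2 n

theorem lint_seg {n : ℕ} {H : EVec n → ℝ≥0∞} (hH : Measurable H) {t : ℝ}
    (D : Set (EVec n)) :
    ∫⁻ y in D, ∫⁻ z in D, H (y + t • (z - y)) ≤ 2 ^ n * volume D * ∫⁻ y, H y := by
  rcases le_total (1/2) t with h | h
  · calc _ ≤ ∫⁻ y in D, 2 ^ n * ∫⁻ y, H y := by
          refine lintegral_mono fun y => ?_
          refine (setLIntegral_le_lintegral _ _).trans ?_
          have := lint_affine hH h ((1 - t) • y)
          have e : ∀ z, y + t • (z - y) = t • z + (1 - t) • y := fun z => by module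
          simp_rw [e]; exact this
      _ = _ := by rw [setLIntegral_const]; ring
  · rw [lintegral_lintegral_swap (by fun_prop)]
    calc _ ≤ ∫⁻ y in D, 2 ^ n * ∫⁻ y, H y := by
          refine lintegral_mono fun z => ?_
          refine (setLIntegral_le_lintegral _ _).trans ?_
          have := lint_affine hH (a := 1 - t) (by linarith) (t • z)
          have e : ∀ y, y + t • (z - y) = (1 - t) • y + t • z := fun y => by module
          simp_rw [e]; exact this
      _ = _ := by rw [setLIntegral_const]; ring

theorem poinc_smooth {n : ℕ} {D : Set (EVec n)} (hD : Convex ℝ D) (hDm : MeasurableSet D) {d : NNReal}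
    (hd : ∀ y ∈ D, ∀ z ∈ D, ‖z - y‖₊ ≤ d) {K : NNReal} {g : EVec n → EVec n} (hg : LipschitzWith K g)
    {u : EVec n → ℝ} (hu : ContDiff ℝ 1 u) :
    ∫⁻ p in D ×ˢ D, ‖u (g p.1) - u (g p.2)‖ₑ ∂(volume.prod volume)
      ≤ (K * d) * (2 ^ n * volume D * ∫⁻ y in D, ‖fderiv ℝ u (g y)‖ₑ) := by
  have hguc : Continuous (fun y => u (g y)) := hu.continuous.comp hg.continuous
  have hm : Measurable (fun y => ‖fderiv ℝ u (g y)‖ₑ) :=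
    ((hu.continuous_fderiv (by norm_num)).comp hg.continuous).enorm.measurable
  set H := D.indicator (fun y => ‖fderiv ℝ u (g y)‖ₑ) with hH
  have hHm : Measurable H := hm.indicator hDm
  rw [← Measure.prod_restrict, lintegral_prod _ (by
    exact ((hguc.comp continuous_fst).sub (hguc.comp continuous_snd)).enorm.measurable.aemeasurable)]
  have hpt : ∀ y ∈ D, ∀ z ∈ D, ‖u (g y) - u (g z)‖ₑ ≤ (K * d) * ∫⁻ t in Icc (0:ℝ) 1, H (y + t • (z - y)) := by
    intro y hy z hz
    have hγ : LipschitzWith (K * d) (fun t : ℝ => g (y + t • (z - y))) := by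
      refine hg.comp (LipschitzWith.of_dist_le_mul fun a b => ?_)
      rw [dist_add_left, dist_eq_norm, ← sub_smul, norm_smul, ← dist_eq_norm, mul_comm]
      gcongr
      exact_mod_cast hd y hy z hz
    have h1 := path_enorm hγ hu
    simp only [zero_smul, add_zero, one_smul, add_sub_cancel] at h1
    refine h1.trans ?_
    push_cast
    refine mul_le_mul' le_rfl ?_
    refine setLIntegral_mono' measurableSet_Icc fun t ht => ?_
    have : y + t • (z - y) ∈ D := hD.add_smul_sub_mem hy hz ht
    simp [hH, this]
  calc _ ≤ ∫⁻ y in D, ∫⁻ z in D, (K * d) * ∫⁻ t in Icc (0:ℝ) 1, H (y + t • (z - y)) :=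
        setLIntegral_mono' hDm fun y hy => setLIntegral_mono' hDm fun z hz => hpt y hy z hz
    _ = (K * d) * ∫⁻ y in D, ∫⁻ z in D, ∫⁻ t in Icc (0:ℝ) 1, H (y + t • (z - y)) := by
        rw [← lintegral_const_mul' _ _ (by finiteness)]
        congr 1; ext y
        rw [← lintegral_const_mul' _ _ (by finiteness)]
    _ = (K * d) * ∫⁻ t in Icc (0:ℝ) 1, ∫⁻ y in D, ∫⁻ z in D, H (y + t • (z - y)) := by
        congr 1
        rw [lintegral_lintegral_swap (f := fun t y => ∫⁻ z in D, H (y + t • (z - y)))]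
        · congr 1; ext y
          rw [lintegral_lintegral_swap]
          fun_prop
        · have : Measurable (fun q : (ℝ × EVec n) × EVec n => H (q.1.2 + q.1.1 • (q.2 - q.1.2))) := by fun_prop
          exact (this.lintegral_prod_right').aemeasurable
    _ ≤ (K * d) * ∫⁻ t in Icc (0:ℝ) 1, (2 ^ n * volume D * ∫⁻ y, H y) := by
        gcongr with t
        exact lint_seg hHm D
    _ = _ := by
        rw [setLIntegral_const, hH, lintegral_indicator hDm]
        simp

theorem chart_int1 {n : ℕ} {D V : Set (EVec n)} {K : NNReal}
    {g h : EVec n → EVec n} (hg : LipschitzWith K g) (hh : LipschitzOnWith K h V)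
    (hgV : ∀ y ∈ D, g y ∈ V ∧ h (g y) = y) :
    Measure.map g (volume.restrict D) ≤ (K : ℝ≥0∞) ^ n • volume.restrict V := by
  refine Measure.le_iff.2 fun A hA => ?_
  have hgm := hg.continuous.measurable
  rw [Measure.map_apply hgm hA, Measure.restrict_apply (hgm hA), Measure.smul_apply, Measure.restrict_apply hA, smul_eq_mul]
  refine le_trans (measure_mono ?_) (vol_image_le (hh.mono inter_subset_right))
  rintro y ⟨hy1, hy2⟩
  exact ⟨g y, ⟨hy1, (hgV y hy2).1⟩, (hgV y hy2).2⟩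

theorem chart_int2 {n : ℕ} {D V : Set (EVec n)} {K : NNReal}
    {g h : EVec n → EVec n} (hg : LipschitzWith K g)
    (hhD : ∀ x ∈ V, h x ∈ D ∧ g (h x) = x) :
    volume.restrict V ≤ (K : ℝ≥0∞) ^ n • Measure.map g (volume.restrict D) := by
  refine Measure.le_iff.2 fun A hA => ?_
  have hgm := hg.continuous.measurable
  rw [Measure.smul_apply, Measure.map_apply hgm hA, Measure.restrict_apply (hgm hA), Measure.restrict_apply hA, smul_eq_mul]
  refine le_trans (measure_mono ?_) (vol_image_le hg.lipschitzOnWith)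
  rintro x ⟨hx1, hx2⟩
  exact ⟨h x, ⟨by simpa [(hhD x hx2).2] using hx1, (hhD x hx2).1⟩, (hhD x hx2).2⟩

/-- scalar weak derivative -/
def ScalarWeak {n : ℕ} (Ω : Set (EVec n)) (w : EVec n → ℝ) (q : EVec n → Fin n → ℝ) : Prop :=
  IntegrableOn w Ω volume ∧ (∀ i, IntegrableOn (fun x => q x i) Ω volume) ∧
  ∀ φ : EVec n → ℝ, ContDiff ℝ 1 φ → HasCompactSupport φ → tsupport φ ⊆ Ω →
    ∀ (i : Fin n), ∫ x in Ω, w x * fderiv ℝ φ x (EuclideanSpace.single i 1) =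
        - ∫ x in Ω, q x i * φ x

theorem enorm_le_sum_basis {n : ℕ} (A : EVec n →L[ℝ] ℝ) :
    ‖A‖ₑ ≤ ∑ i, ‖A (EuclideanSpace.single i 1)‖ₑ := by
  have h : ‖A‖ ≤ ∑ i, ‖A (EuclideanSpace.single i 1)‖ := by
    refine A.opNorm_le_bound (Finset.sum_nonneg fun i _ => norm_nonneg _) fun x => ?_
    have hx : x = ∑ i, x i • (EuclideanSpace.single i (1:ℝ) : EVec n) := by
      ext j
      simp [Finset.sum_apply, Pi.single_apply]
    conv_lhs => rw [hx]
    rw [map_sum, Finset.sum_mul]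
    refine (norm_sum_le _ _).trans (Finset.sum_le_sum fun i _ => ?_)
    rw [map_smul, norm_smul, mul_comm]
    gcongr
    exact PiLp.norm_apply_le x i
  rw [← ofReal_norm]
  refine (ENNReal.ofReal_le_ofReal h).trans ?_
  rw [ENNReal.ofReal_sum_of_nonneg fun i _ => norm_nonneg _]
  exact Finset.sum_le_sum fun i _ => (ofReal_norm _).le

theorem mollify_deriv {n : ℕ} {Ω : Set (EVec n)} (hΩ : IsOpen Ω) {w : EVec n → ℝ} {q : EVec n → Fin n → ℝ}
    (hw : ScalarWeak Ω w q) (φ : ContDiffBump (0 : EVec n)) :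
    ContDiff ℝ 1 (MeasureTheory.convolution (φ.normed volume) (Ω.indicator w) (ContinuousLinearMap.lsmul ℝ ℝ) volume) ∧
    ∀ x, Metric.closedBall x φ.rOut ⊆ Ω → ∀ i,
      fderiv ℝ (MeasureTheory.convolution (φ.normed volume) (Ω.indicator w) (ContinuousLinearMap.lsmul ℝ ℝ) volume) x
        (EuclideanSpace.single i 1) = ∫ t in Ω, q t i * φ.normed volume (x - t) := by
  have hW : Integrable (Ω.indicator w) volume := (integrable_indicator_iff hΩ.measurableSet).2 hw.1
  have hφc : HasCompactSupport (φ.normed volume) := φ.hasCompactSupport_normed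
  have hφs : ContDiff ℝ 1 (φ.normed volume) := φ.contDiff_normed (n := 1)
  rw [← convolution_flip]
  refine ⟨hφc.contDiff_convolution_right (n := 1) _ hW.locallyIntegrable hφs, fun x hx i => ?_⟩
  rw [(hφc.hasFDerivAt_convolution_right (ContinuousLinearMap.lsmul ℝ ℝ).flip hW.locallyIntegrable hφs x).fderiv]
  rw [convolution_precompR_apply _ hW.locallyIntegrable (hφc.fderiv ℝ) (hφs.continuous_fderiv (by norm_num))]
  rw [convolution_def]
  have h1 : ∀ t, ((ContinuousLinearMap.lsmul ℝ ℝ).flip (Ω.indicator w t))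
      ((fderiv ℝ (φ.normed volume) (x - t)) (EuclideanSpace.single i 1)) =
      Ω.indicator (fun t => w t * (fderiv ℝ (φ.normed volume) (x - t)) (EuclideanSpace.single i 1)) t := by
    intro t
    by_cases ht : t ∈ Ω <;> simp [ht, mul_comm]
  simp_rw [h1]
  rw [integral_indicator hΩ.measurableSet]
  have hψ : ContDiff ℝ 1 (fun t => φ.normed volume (x - t)) := hφs.comp (contDiff_const.sub contDiff_id)
  have hsub : Function.support (fun t => φ.normed volume (x - t)) ⊆ Metric.closedBall x φ.rOut := by
    intro t ht
    have : x - t ∈ Function.support (φ.normed volume) := ht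
    rw [φ.support_normed_eq, mem_ball_zero_iff] at this
    rw [mem_closedBall_iff_norm, norm_sub_rev]; exact this.le
  have hts : tsupport (fun t => φ.normed volume (x - t)) ⊆ Metric.closedBall x φ.rOut :=
    closure_minimal hsub Metric.isClosed_closedBall
  have := hw.2.2 _ hψ (HasCompactSupport.of_support_subset_isCompact (isCompact_closedBall x φ.rOut) hsub)
    (hts.trans hx) i
  have h2 : ∀ t, fderiv ℝ (fun t => φ.normed volume (x - t)) t = - fderiv ℝ (φ.normed volume) (x - t) := by
    intro t
    have h3 := ((hφs.differentiable (by norm_num)) (x - t)).hasFDerivAt.comp t ((hasFDerivAt_id t).const_sub x)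
    have h4 := h3.fderiv
    ext v
    change fderiv ℝ (φ.normed volume ∘ fun t => x - t) t v = _
    erw [h4]
    simp
  simp only [h2, neg_apply, mul_neg, integral_neg, neg_inj] at this
  exact this

theorem mollify {n : ℕ} {Ω : Set (EVec n)} (hΩ : IsOpen Ω) {w : EVec n → ℝ} {q : EVec n → Fin n → ℝ}
    (hw : ScalarWeak Ω w q) {M : Set (EVec n)} (hM : IsCompact M) (hMΩ : M ⊆ Ω) :
    ∃ u : ℕ → EVec n → ℝ, (∀ k, ContDiff ℝ 1 (u k)) ∧
      (∀ᵐ x ∂volume, Tendsto (fun k => u k x) atTop (𝓝 (Ω.indicator w x))) ∧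
      ∀ᶠ k in atTop, ∫⁻ x in M, ‖fderiv ℝ (u k) x‖ₑ ≤ ∑ i, ∫⁻ x in Ω, ‖q x i‖ₑ := by
  have hW : Integrable (Ω.indicator w) volume := (integrable_indicator_iff hΩ.measurableSet).2 hw.1
  let φ : ℕ → ContDiffBump (0 : EVec n) := fun k =>
    ⟨1 / ((k:ℝ) + 1), 2 * (1 / ((k:ℝ) + 1)), by positivity, by
      have : 0 < 1 / ((k:ℝ) + 1) := by positivity
      linarith⟩
  have hφt : Tendsto (fun k => (φ k).rOut) atTop (𝓝 0) := by
    have := (tendsto_one_div_add_atTop_nhds_zero_nat (𝕜 := ℝ)).const_mul 2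
    simpa [φ] using this
  refine ⟨fun k => MeasureTheory.convolution ((φ k).normed volume) (Ω.indicator w) (ContinuousLinearMap.lsmul ℝ ℝ) volume,
    fun k => (mollify_deriv hΩ hw (φ k)).1,
    ContDiffBump.ae_convolution_tendsto_right_of_locallyIntegrable hφt (K := 2)
      (Eventually.of_forall fun k => le_rfl) hW.locallyIntegrable, ?_⟩
  obtain ⟨δ, hδ, hδΩ⟩ := hM.exists_cthickening_subset_open hΩ hMΩ
  filter_upwards [hφt.eventually (gt_mem_nhds hδ)] with k hk
  have hball : ∀ x ∈ M, Metric.closedBall x (φ k).rOut ⊆ Ω := fun x hx =>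
    (Metric.closedBall_subset_closedBall hk.le).trans ((Metric.closedBall_subset_cthickening hx δ).trans hδΩ)
  have hφm : Measurable ((φ k).normed volume) := (φ k).continuous_normed.measurable
  have hone : ∫⁻ x, ‖(φ k).normed volume x‖ₑ = 1 := by
    have h1 := ofReal_integral_eq_lintegral_ofReal ((φ k).integrable_normed (μ := volume))
      (ae_of_all _ (φ k).nonneg_normed)
    rw [(φ k).integral_normed] at h1
    rw [← ENNReal.ofReal_one, h1]
    exact lintegral_congr fun x => Real.enorm_of_nonneg ((φ k).nonneg_normed x)
  have h2 : Measurable (fun p : EVec n × EVec n => ‖(φ k).normed volume (p.1 - p.2)‖ₑ) :=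
    (hφm.comp (measurable_fst.sub measurable_snd)).enorm
  calc _ ≤ ∫⁻ x in M, ∑ i, ∫⁻ t in Ω, ‖q t i‖ₑ * ‖(φ k).normed volume (x - t)‖ₑ := by
        refine setLIntegral_mono' hM.measurableSet fun x hx => ?_
        refine (enorm_le_sum_basis _).trans (Finset.sum_le_sum fun i _ => ?_)
        rw [(mollify_deriv hΩ hw (φ k)).2 x (hball x hx) i]
        refine (enorm_integral_le_lintegral_enorm _).trans (le_of_eq ?_)
        simp_rw [enorm_mul]
    _ ≤ ∫⁻ x, ∑ i, ∫⁻ t in Ω, ‖q t i‖ₑ * ‖(φ k).normed volume (x - t)‖ₑ := setLIntegral_le_lintegral _ _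
    _ = ∑ i, ∫⁻ x, ∫⁻ t in Ω, ‖q t i‖ₑ * ‖(φ k).normed volume (x - t)‖ₑ := by
        rw [lintegral_finsetSum']
        intro i _
        refine AEMeasurable.lintegral_prod_right' (f := fun p : EVec n × EVec n => ‖q p.2 i‖ₑ * ‖(φ k).normed volume (p.1 - p.2)‖ₑ) ?_
        refine AEMeasurable.mul ?_ h2.aemeasurable
        exact ((hw.2.1 i).aestronglyMeasurable.aemeasurable.enorm.comp_quasiMeasurePreserving Measure.quasiMeasurePreserving_snd)
    _ = _ := by
        refine Finset.sum_congr rfl fun i _ => ?_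
        rw [lintegral_lintegral_swap]
        · refine lintegral_congr fun t => ?_
          rw [lintegral_const_mul' _ _ (by finiteness), lintegral_sub_right_eq_self (fun x => ‖(φ k).normed volume x‖ₑ), hone, mul_one]
        · refine AEMeasurable.mul ?_ h2.aemeasurable
          exact ((hw.2.1 i).aestronglyMeasurable.aemeasurable.enorm.comp_quasiMeasurePreserving Measure.quasiMeasurePreserving_snd)

theorem pair_compact {n : ℕ} {Ω : Set (EVec n)} (hΩ : IsOpen Ω) {w : EVec n → ℝ} {q : EVec n → Fin n → ℝ}
    (hw : ScalarWeak Ω w q) {Q : Set (EVec n)} (hQ : IsCompact Q) (hQc : Convex ℝ Q)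
    {d K : NNReal} (hd : ∀ y ∈ Q, ∀ z ∈ Q, ‖z - y‖₊ ≤ d) {g h : EVec n → EVec n}
    (hg : LipschitzWith K g) (hh : LipschitzOnWith K h (g '' Q)) (hgh : ∀ y ∈ Q, h (g y) = y)
    (hgΩ : g '' Q ⊆ Ω) :
    ∫⁻ p in Q ×ˢ Q, ‖w (g p.1) - w (g p.2)‖ₑ ∂(volume.prod volume) ≤
      (K * d) * (2 ^ n * volume Q * ((K:ℝ≥0∞) ^ n * ∑ i, ∫⁻ x in Ω, ‖q x i‖ₑ)) := by
  obtain ⟨u, hu, hut, hub⟩ := mollify hΩ hw (hQ.image hg.continuous) hgΩ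
  have hmap := chart_int1 (D := Q) (V := g '' Q) hg hh (fun y hy => ⟨mem_image_of_mem g hy, hgh y hy⟩)
  have hac : Measure.map g (volume.restrict Q) ≪ volume :=
    ((Measure.absolutelyContinuous_of_le hmap).trans
      (Measure.smul_absolutelyContinuous)).trans Measure.restrict_le_self.absolutelyContinuous
  have hae : ∀ᵐ y ∂(volume.restrict Q), Tendsto (fun k => u k (g y)) atTop (𝓝 (w (g y))) := by
    have h1 := ae_of_ae_map hg.continuous.measurable.aemeasurable (hac.ae_le hut)
    filter_upwards [h1, ae_restrict_mem hQ.measurableSet] with y hy hyQ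
    rwa [indicator_of_mem (hgΩ (mem_image_of_mem g hyQ))] at hy
  have hprod : (volume.prod volume).restrict (Q ×ˢ Q) = ((volume : Measure (EVec n)).restrict Q).prod (volume.restrict Q) :=
    (Measure.prod_restrict Q Q).symm
  have hae2 : ∀ᵐ p ∂((volume.prod volume).restrict (Q ×ˢ Q)), 
      Tendsto (fun k => ‖u k (g p.1) - u k (g p.2)‖ₑ) atTop (𝓝 ‖w (g p.1) - w (g p.2)‖ₑ) := by
    rw [hprod]
    have h1 := (Measure.quasiMeasurePreserving_fst (μ := (volume : Measure (EVec n)).restrict Q) (ν := volume.restrict Q)).ae hae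
    have h2 := (Measure.quasiMeasurePreserving_snd (μ := (volume : Measure (EVec n)).restrict Q) (ν := volume.restrict Q)).ae hae
    filter_upwards [h1, h2] with p hp1 hp2
    exact (hp1.sub hp2).enorm
  calc _ = ∫⁻ p in Q ×ˢ Q, liminf (fun k => ‖u k (g p.1) - u k (g p.2)‖ₑ) atTop ∂(volume.prod volume) := by
        refine lintegral_congr_ae ?_
        filter_upwards [hae2] with p hp using hp.liminf_eq.symm
    _ ≤ liminf (fun k => ∫⁻ p in Q ×ˢ Q, ‖u k (g p.1) - u k (g p.2)‖ₑ ∂(volume.prod volume)) atTop := by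
        refine lintegral_liminf_le fun k => ?_
        have := (hu k).continuous
        have := hg.continuous
        exact Continuous.measurable (by fun_prop)
    _ ≤ liminf (fun k : ℕ => (K * d) * (2 ^ n * volume Q * ((K:ℝ≥0∞) ^ n * ∑ i, ∫⁻ x in Ω, ‖q x i‖ₑ))) atTop := by
        refine liminf_le_liminf ?_
        filter_upwards [hub] with k hk
        refine (poinc_smooth hQc hQ.measurableSet hd hg (hu k)).trans ?_
        refine mul_le_mul' le_rfl (mul_le_mul' le_rfl ?_)
        refine le_trans ?_ (mul_le_mul' le_rfl hk)
        have hm : Measurable fun x => ‖fderiv ℝ (u k) x‖ₑ :=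
          ((hu k).continuous_fderiv (by norm_num)).enorm.measurable
        rw [← lintegral_map hm hg.continuous.measurable]
        refine (lintegral_mono' hmap le_rfl).trans ?_
        rw [lintegral_smul_measure, smul_eq_mul]
    _ = _ := liminf_const _

theorem pair_chart {n : ℕ} {Ω : Set (EVec n)} (hΩ : IsOpen Ω) {w : EVec n → ℝ} {q : EVec n → Fin n → ℝ}
    (hw : ScalarWeak Ω w q) {D : Set (EVec n)} (hD : IsOpen D) (hDc : Convex ℝ D)
    {d K : NNReal} (hd : ∀ y ∈ D, ∀ z ∈ D, ‖z - y‖₊ ≤ d) {g h : EVec n → EVec n}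
    (hg : LipschitzWith K g) (hh : LipschitzOnWith K h (g '' D)) (hgh : ∀ y ∈ D, h (g y) = y)
    (hgΩ : g '' D ⊆ Ω) :
    ∫⁻ p in D ×ˢ D, ‖w (g p.1) - w (g p.2)‖ₑ ∂(volume.prod volume) ≤
      (K * d) * (2 ^ n * volume D * ((K:ℝ≥0∞) ^ n * ∑ i, ∫⁻ x in Ω, ‖q x i‖ₑ)) := by
  let Q : ℕ → Set (EVec n) := fun j => {y | Metric.ball y (1 / ((j:ℝ) + 1)) ⊆ D}
  have hpos : ∀ j : ℕ, 0 < 1 / ((j:ℝ) + 1) := fun j => by positivity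
  have hQD : ∀ j, Q j ⊆ D := fun j y hy => hy (Metric.mem_ball_self (hpos j))
  have hbdd : Bornology.IsBounded D := by
    rw [Metric.isBounded_iff]
    refine ⟨d, fun x hx y hy => ?_⟩
    rw [dist_eq_norm]
    exact_mod_cast hd y hy x hx
  have hQcl : ∀ j, IsClosed (Q j) := by
    intro j
    rw [← isSeqClosed_iff_isClosed]
    intro x y hx hxy z hz
    have h1 : Tendsto (fun k => dist z (x k)) atTop (𝓝 (dist z y)) := tendsto_const_nhds.dist hxy
    obtain ⟨k, hk⟩ := (h1.eventually (gt_mem_nhds (Metric.mem_ball.1 hz))).exists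
    exact hx k (Metric.mem_ball.2 hk)
  have hQcomp : ∀ j, IsCompact (Q j) := fun j =>
    Metric.isCompact_of_isClosed_isBounded (hQcl j) (hbdd.subset (hQD j))
  have hQconv : ∀ j, Convex ℝ (Q j) := by
    intro j x hx y hy a b ha hb hab z hz
    have e : z = a • (x + (z - (a • x + b • y))) + b • (y + (z - (a • x + b • y))) := by
      have : z - (a • x + b • y) = (a + b) • (z - (a • x + b • y)) := by rw [hab, one_smul]
      rw [smul_add, smul_add, add_add_add_comm, ← add_smul, hab, one_smul]
      abel
    rw [e]
    rw [Metric.mem_ball, dist_eq_norm] at hz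
    refine hDc (hx ?_) (hy ?_) ha hb hab
    · rw [Metric.mem_ball, dist_eq_norm, add_sub_cancel_left]; exact hz
    · rw [Metric.mem_ball, dist_eq_norm, add_sub_cancel_left]; exact hz
  have hmono : Monotone Q := by
    intro i j hij y hy
    refine (Metric.ball_subset_ball ?_).trans hy
    exact Nat.one_div_le_one_div hij
  have hU : D ×ˢ D = ⋃ j, Q j ×ˢ Q j := by
    refine Subset.antisymm ?_ (iUnion_subset fun j => prod_mono (hQD j) (hQD j))
    rintro ⟨y, z⟩ ⟨hy, hz⟩
    have key : ∀ y ∈ D, ∃ j, y ∈ Q j := by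
      intro y hy
      obtain ⟨ε, hε, hb⟩ := Metric.isOpen_iff.1 hD y hy
      obtain ⟨j, hj⟩ := exists_nat_one_div_lt hε
      exact ⟨j, (Metric.ball_subset_ball hj.le).trans hb⟩
    obtain ⟨j1, h1⟩ := key y hy
    obtain ⟨j2, h2⟩ := key z hz
    exact mem_iUnion.2 ⟨max j1 j2, hmono (le_max_left _ _) h1, hmono (le_max_right _ _) h2⟩
  rw [hU, setLIntegral_iUnion_of_directed _ (Monotone.directed_le fun i j hij => prod_mono (hmono hij) (hmono hij))]
  refine iSup_le fun j => ?_
  refine (pair_compact hΩ hw (hQcomp j) (hQconv j) (fun y hy z hz => hd y (hQD j hy) z (hQD j hz)) hg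
    (hh.mono (image_mono (hQD j))) (fun y hy => hgh y (hQD j hy)) ((image_mono (hQD j)).trans hgΩ)).trans ?_
  gcongr
  exact hQD j

/-- Poincare property of a subset. -/
def PProp {n : ℕ} (Ω A : Set (EVec n)) : Prop :=
  ∃ C : ℝ≥0∞, C ≠ ⊤ ∧ ∀ (w : EVec n → ℝ) (q : EVec n → Fin n → ℝ), ScalarWeak Ω w q →
    ∃ c : ℝ, ∫⁻ x in A, ‖w x - c‖ₑ ≤ C * ∑ i, ∫⁻ x in Ω, ‖q x i‖ₑ

theorem pprop_chart {n : ℕ} {Ω : Set (EVec n)} (hΩ : IsOpen Ω) {D V : Set (EVec n)} (hD : IsOpen D) (hDc : Convex ℝ D)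
    (hDn : D.Nonempty) (hDb : Bornology.IsBounded D) {K : NNReal} {g h : EVec n → EVec n}
    (hg : LipschitzWith K g) (hh : LipschitzOnWith K h V) (hVΩ : V ⊆ Ω)
    (hgV : ∀ y ∈ D, g y ∈ V ∧ h (g y) = y) (hhD : ∀ x ∈ V, h x ∈ D ∧ g (h x) = x) : PProp Ω V := by
  obtain ⟨d, hd⟩ := Metric.isBounded_iff_nndist.1 hDb
  have hd' : ∀ y ∈ D, ∀ z ∈ D, ‖z - y‖₊ ≤ d := fun y hy z hz => by
    have := hd hz hy
    rwa [nndist_eq_nnnorm] at this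
  have hgD : g '' D ⊆ V := by rintro _ ⟨y, hy, rfl⟩; exact (hgV y hy).1
  have hDpos : volume D ≠ 0 := (hD.measure_pos volume hDn).ne'
  have hDtop : volume D ≠ ⊤ := hDb.measure_lt_top.ne
  refine ⟨(K:ℝ≥0∞) ^ n * ((K * d) * (2 ^ n * volume D * (K:ℝ≥0∞) ^ n) / volume D), ?_, fun w q hw => ?_⟩
  · refine ENNReal.mul_ne_top (by finiteness) (ENNReal.div_ne_top (by finiteness) hDpos)
  have hmap := chart_int1 (D := D) (V := V) hg hh hgV
  have hqmp : Measure.QuasiMeasurePreserving g (volume.restrict D) (volume.restrict Ω) :=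
    ⟨hg.continuous.measurable, ((Measure.absolutelyContinuous_of_le hmap).trans
      (Measure.smul_absolutelyContinuous)).trans (Measure.absolutelyContinuous_of_le (Measure.restrict_mono hVΩ le_rfl))⟩
  have hwg : AEMeasurable (fun y => w (g y)) (volume.restrict D) :=
    hw.1.aestronglyMeasurable.aemeasurable.comp_quasiMeasurePreserving hqmp
  have hb := pair_chart hΩ hw hD hDc hd' hg (hh.mono hgD) (fun y hy => (hgV y hy).2) (hgD.trans hVΩ)
  have hm : AEMeasurable (fun p : EVec n × EVec n => ‖w (g p.1) - w (g p.2)‖ₑ)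
      (((volume : Measure (EVec n)).restrict D).prod (volume.restrict D)) :=
    ((hwg.comp_quasiMeasurePreserving Measure.quasiMeasurePreserving_fst).sub
      (hwg.comp_quasiMeasurePreserving Measure.quasiMeasurePreserving_snd)).enorm
  rw [← Measure.prod_restrict, lintegral_prod_symm _ hm] at hb
  have hm2 : AEMeasurable (fun z => ∫⁻ y in D, ‖w (g y) - w (g z)‖ₑ) (volume.restrict D) :=
    hm.prod_swap.lintegral_prod_right'
  obtain ⟨z, hz, hz2⟩ := exists_le_setLAverage hDpos hDtop hm2
  refine ⟨w (g z), ?_⟩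
  rw [setLAverage_eq] at hz2
  have h2 := chart_int2 (D := D) (V := V) hg hhD
  calc _ ≤ ∫⁻ x, ‖w x - w (g z)‖ₑ ∂((K:ℝ≥0∞)^n • Measure.map g (volume.restrict D)) := lintegral_mono' h2 le_rfl
    _ = (K:ℝ≥0∞)^n * ∫⁻ x, ‖w x - w (g z)‖ₑ ∂(Measure.map g (volume.restrict D)) := by
      rw [lintegral_smul_measure, smul_eq_mul]
    _ ≤ (K:ℝ≥0∞)^n * ∫⁻ y in D, ‖w (g y) - w (g z)‖ₑ := mul_le_mul' le_rfl (lintegral_map_le _ _)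
    _ ≤ (K:ℝ≥0∞)^n * (((K * d) * (2 ^ n * volume D * ((K:ℝ≥0∞) ^ n * ∑ i, ∫⁻ x in Ω, ‖q x i‖ₑ))) / volume D) :=
      mul_le_mul' le_rfl (hz2.trans (ENNReal.div_le_div_right hb _))
    _ = _ := by
      simp only [ENNReal.div_eq_inv_mul]
      ring

theorem pprop_union {n : ℕ} {Ω A B : Set (EVec n)} (hA : PProp Ω A) (hB : PProp Ω B) (hAΩ : A ⊆ Ω) (hBΩ : B ⊆ Ω)
    (hv : volume (A ∩ B) ≠ 0) (hBt : volume B ≠ ⊤) : PProp Ω (A ∪ B) := by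
  obtain ⟨CA, hCA, hA⟩ := hA
  obtain ⟨CB, hCB, hB⟩ := hB
  refine ⟨CA + (CB + (CA + CB) / volume (A ∩ B) * volume B), ?_, fun w q hw => ?_⟩
  · have : (CA + CB) / volume (A ∩ B) ≠ ⊤ := ENNReal.div_ne_top (by finiteness) hv
    finiteness
  obtain ⟨cA, hA⟩ := hA w q hw
  obtain ⟨cB, hB⟩ := hB w q hw
  set S := ∑ i, ∫⁻ x in Ω, ‖q x i‖ₑ
  have hwm : AEMeasurable w (volume.restrict Ω) := hw.1.aestronglyMeasurable.aemeasurable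
  have hABt : volume (A ∩ B) ≠ ⊤ := measure_ne_top_of_subset inter_subset_right hBt
  have h1 : ‖cA - cB‖ₑ * volume (A ∩ B) ≤ (CA + CB) * S := by
    calc ‖cA - cB‖ₑ * volume (A ∩ B) = ∫⁻ x in A ∩ B, ‖cA - cB‖ₑ := by rw [setLIntegral_const]
      _ ≤ ∫⁻ x in A ∩ B, (‖w x - cA‖ₑ + ‖w x - cB‖ₑ) := by
        refine lintegral_mono fun x => ?_
        rw [← enorm_neg (w x - cA)]
        have : cA - cB = -(w x - cA) + (w x - cB) := by ring
        rw [this]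
        exact enorm_add_le _ _
      _ = (∫⁻ x in A ∩ B, ‖w x - cA‖ₑ) + ∫⁻ x in A ∩ B, ‖w x - cB‖ₑ := by
        refine lintegral_add_left' ?_ _
        exact ((hwm.mono_set (inter_subset_left.trans hAΩ)).sub aemeasurable_const).enorm
      _ ≤ CA * S + CB * S := by
        refine add_le_add ((lintegral_mono_set inter_subset_left).trans hA) ((lintegral_mono_set inter_subset_right).trans hB)
      _ = _ := by ring
  have h2 : ‖cA - cB‖ₑ ≤ (CA + CB) / volume (A ∩ B) * S := by
    have : ‖cA - cB‖ₑ ≤ (CA + CB) * S / volume (A ∩ B) := (ENNReal.le_div_iff_mul_le (Or.inl hv) (Or.inl hABt)).2 h1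
    refine this.trans (le_of_eq ?_)
    simp only [ENNReal.div_eq_inv_mul]; ring
  refine ⟨cA, ?_⟩
  calc _ ≤ (∫⁻ x in A, ‖w x - cA‖ₑ) + ∫⁻ x in B, ‖w x - cA‖ₑ := lintegral_union_le _ _ _
    _ ≤ CA * S + ∫⁻ x in B, (‖w x - cB‖ₑ + ‖cB - cA‖ₑ) := by
      refine add_le_add hA (lintegral_mono fun x => ?_)
      have : w x - cA = (w x - cB) + (cB - cA) := by ring
      rw [this]
      exact enorm_add_le _ _
    _ = CA * S + ((∫⁻ x in B, ‖w x - cB‖ₑ) + ‖cB - cA‖ₑ * volume B) := by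
      rw [lintegral_add_right _ measurable_const, setLIntegral_const]
    _ ≤ CA * S + (CB * S + ((CA + CB) / volume (A ∩ B) * S) * volume B) := by
      have : ‖cB - cA‖ₑ = ‖cA - cB‖ₑ := by rw [← enorm_neg]; congr 1; ring
      rw [this]
      gcongr
    _ = _ := by ring

theorem pprop_glue {n : ℕ} {Ω : Set (EVec n)} (hΩc : IsPreconnected Ω) (hne : Ω.Nonempty) (hΩb : Bornology.IsBounded Ω)
    {ι : Type*} (t : Finset ι) (V : ι → Set (EVec n)) (hV : ∀ i ∈ t, IsOpen (V i) ∧ (V i).Nonempty ∧ V i ⊆ Ω ∧ PProp Ω (V i))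
    (hcov : Ω ⊆ ⋃ i ∈ t, V i) : PProp Ω Ω := by
  classical
  have hsub : ∀ s ⊆ t, (⋃ i ∈ s, V i) ⊆ Ω := fun s hs => iUnion₂_subset fun i hi => (hV i (hs hi)).2.2.1
  let S := t.powerset.filter (fun s => s.Nonempty ∧ PProp Ω (⋃ i ∈ s, V i))
  have hS : S.Nonempty := by
    obtain ⟨x, hx⟩ := hne
    obtain ⟨i, hi, -⟩ := mem_iUnion₂.1 (hcov hx)
    refine ⟨{i}, Finset.mem_filter.2 ⟨by simpa using hi, by simp, ?_⟩⟩
    simpa using (hV i hi).2.2.2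
  obtain ⟨s, hsS, hmax⟩ := Finset.exists_max_image S Finset.card hS
  obtain ⟨hst, hsn, hP⟩ := Finset.mem_filter.1 hsS
  rw [Finset.mem_powerset] at hst
  by_cases hall : Ω ⊆ ⋃ i ∈ s, V i
  · rwa [Subset.antisymm (hsub s hst) hall] at hP
  exfalso
  obtain ⟨x, hx, hxs⟩ := not_subset.1 hall
  obtain ⟨j, hj, hxj⟩ := mem_iUnion₂.1 (hcov hx)
  have hjs : j ∉ s := fun h => hxs (mem_iUnion₂.2 ⟨j, h, hxj⟩)
  have hoA : IsOpen (⋃ i ∈ s, V i) := isOpen_biUnion fun i hi => (hV i (hst hi)).1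
  have hoB : IsOpen (⋃ i ∈ t \ s, V i) := isOpen_biUnion fun i hi => (hV i (Finset.mem_sdiff.1 hi).1).1
  obtain ⟨i0, hi0⟩ := hsn
  obtain ⟨y0, hy0⟩ := (hV i0 (hst hi0)).2.1
  have := hΩc _ _ hoA hoB (fun z hz => by
      obtain ⟨k, hk, hzk⟩ := mem_iUnion₂.1 (hcov hz)
      by_cases hks : k ∈ s
      · exact Or.inl (mem_iUnion₂.2 ⟨k, hks, hzk⟩)
      · exact Or.inr (mem_iUnion₂.2 ⟨k, Finset.mem_sdiff.2 ⟨hk, hks⟩, hzk⟩))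
    ⟨y0, (hV i0 (hst hi0)).2.2.1 hy0, mem_iUnion₂.2 ⟨i0, hi0, hy0⟩⟩
    ⟨x, hx, mem_iUnion₂.2 ⟨j, Finset.mem_sdiff.2 ⟨hj, hjs⟩, hxj⟩⟩
  obtain ⟨z, hz, hzA, hzB⟩ := this
  obtain ⟨k, hk, hzk⟩ := mem_iUnion₂.1 hzB
  obtain ⟨hkt, hks⟩ := Finset.mem_sdiff.1 hk
  have hP' : PProp Ω ((⋃ i ∈ s, V i) ∪ V k) := by
    refine pprop_union hP (hV k hkt).2.2.2 (hsub s hst) (hV k hkt).2.2.1 ?_ ?_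
    · exact ((hoA.inter (hV k hkt).1).measure_pos volume ⟨z, hzA, hzk⟩).ne'
    · exact (hΩb.subset (hV k hkt).2.2.1).measure_lt_top.ne
  have hin : insert k s ∈ S := by
    refine Finset.mem_filter.2 ⟨Finset.mem_powerset.2 (Finset.insert_subset hkt hst), Finset.insert_nonempty _ _, ?_⟩
    rw [Finset.set_biUnion_insert, union_comm]
    exact hP'
  have := hmax _ hin
  rw [Finset.card_insert_of_notMem hks] at this
  omega

theorem convex_half {n : ℕ} (e : EVec n) : Convex ℝ {y : EVec n | 0 < ⟪e, y⟫} := by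
  intro x hx y hy a b ha hb hab
  simp only [mem_ofPred_eq, inner_add_right, real_inner_smul_right] at *
  rcases eq_or_lt_of_le ha with h | h
  · have : b = 1 := by linarith
    rw [← h, this]; simpa using hy
  · have := mul_pos h hx
    have := mul_nonneg hb hy.le
    linarith

theorem lip_ext {n : ℕ} {D : Set (EVec n)} {f : EVec n → EVec n} {K : NNReal} (hf : LipschitzOnWith K f D) :
    ∃ (g : EVec n → EVec n) (K' : NNReal), LipschitzWith K' g ∧ (∀ y ∈ D, f y = g y) ∧ K ≤ K' := by
  obtain ⟨g, hg, hgD⟩ := hf.extend_finite_dimension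
  exact ⟨g, _, hg.weaken (le_max_right K _), hgD, le_max_left _ _⟩

theorem pprop_bdry_core {n : ℕ} {Ω : Set (EVec n)} (hΩ : IsOpen Ω)
    {U B H : Set (EVec n)} {h hinv : EVec n → EVec n} {K : NNReal}
    (hh : LipschitzOnWith K h U)
    (hi : LipschitzOnWith K hinv (h '' U)) (hl : ∀ y ∈ U, hinv (h y) = y)
    (hhalf : h '' (U ∩ Ω) = (h '' U) ∩ H) (hBU : B ⊆ h '' U)
    (hDo : IsOpen (B ∩ H)) (hDc : Convex ℝ (B ∩ H)) (hDb : Bornology.IsBounded (B ∩ H))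
    (hne : ((U ∩ h ⁻¹' B) ∩ Ω).Nonempty) : PProp Ω ((U ∩ h ⁻¹' B) ∩ Ω) := by
  have hDU : B ∩ H ⊆ h '' U := inter_subset_left.trans hBU
  obtain ⟨g, K', hg, hgD, hK1⟩ := lip_ext (hi.mono hDU)
  have hVD : ∀ z ∈ (U ∩ h ⁻¹' B) ∩ Ω, h z ∈ B ∩ H := by
    rintro z ⟨⟨hzU, hzb⟩, hzΩ⟩
    have : h z ∈ (h '' U) ∩ H := by
      rw [← hhalf]; exact mem_image_of_mem h ⟨hzU, hzΩ⟩
    exact ⟨hzb, this.2⟩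
  have hgl : ∀ z ∈ U, h z ∈ B ∩ H → g (h z) = z := fun z hz hzD => by rw [← hgD _ hzD, hl z hz]
  refine pprop_chart hΩ hDo hDc ?_ hDb (K := K') (g := g) (h := h) hg
    ((hh.mono (inter_subset_left.trans inter_subset_left)).weaken hK1) inter_subset_right ?_ ?_
  · obtain ⟨z, hz⟩ := hne
    exact ⟨h z, hVD z hz⟩
  · intro y hy
    have : y ∈ h '' (U ∩ Ω) := by rw [hhalf]; exact ⟨hDU hy, hy.2⟩
    obtain ⟨z, ⟨hzU, hzΩ⟩, rfl⟩ := this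
    rw [hgl z hzU hy]
    exact ⟨⟨⟨hzU, hy.1⟩, hzΩ⟩, rfl⟩
  · intro z hz
    exact ⟨hVD z hz, hgl z hz.1.1 (hVD z hz)⟩

theorem nontriv_of {n : ℕ} {e : EVec n} (he : ‖e‖ = 1) : Nontrivial (EVec n) := by
  refine ⟨e, 0, fun h0 => ?_⟩
  rw [h0, norm_zero] at he
  exact zero_ne_one he

theorem isOpen_half {n : ℕ} (e : EVec n) : IsOpen {y : EVec n | 0 < ⟪e, y⟫} :=
  isOpen_lt continuous_const (continuous_const.inner continuous_id)

theorem exists_conv_nhd {n : ℕ} {S : Set (EVec n)} (hS : IsOpen S) {p : EVec n} (hp : p ∈ S) :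
    ∃ B : Set (EVec n), IsOpen B ∧ Convex ℝ B ∧ Bornology.IsBounded B ∧ p ∈ B ∧ B ⊆ S := by
  obtain ⟨r, hr, hrU⟩ := Metric.isOpen_iff.1 hS p hp
  exact ⟨_, Metric.isOpen_ball, convex_ball _ _, Metric.isBounded_ball, Metric.mem_ball_self hr, hrU⟩

theorem pprop_bdry {n : ℕ} {Ω : Set (EVec n)} (hΩ : IsOpen Ω) {x : EVec n} (hx : x ∈ closure Ω)
    {U : Set (EVec n)} {h hinv : EVec n → EVec n} {K : NNReal} {e : EVec n}
    (he : ‖e‖ = 1) (hU : IsOpen U) (hxU : x ∈ U) (hh : LipschitzOnWith K h U)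
    (hi : LipschitzOnWith K hinv (h '' U)) (hl : ∀ y ∈ U, hinv (h y) = y)
    (hhalf : h '' (U ∩ Ω) = (h '' U) ∩ {y : EVec n | 0 < ⟪e, y⟫}) :
    ∃ O : Set (EVec n), IsOpen O ∧ x ∈ O ∧ (O ∩ Ω).Nonempty ∧ PProp Ω (O ∩ Ω) := by
  have hop : IsOpen (h '' U) := @isOpen_image_bilip n (nontriv_of he) K U hU h hinv hh hi hl
  obtain ⟨B, hB, hBc, hBb, hxB, hBU⟩ := exists_conv_nhd hop (mem_image_of_mem h hxU)
  have hOo : IsOpen (U ∩ h ⁻¹' B) := hh.continuousOn.isOpen_inter_preimage hU hB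
  have hxO : x ∈ U ∩ h ⁻¹' B := ⟨hxU, hxB⟩
  have hne : ((U ∩ h ⁻¹' B) ∩ Ω).Nonempty := mem_closure_iff.1 hx _ hOo hxO
  exact ⟨U ∩ h ⁻¹' B, hOo, hxO, hne,
    pprop_bdry_core hΩ hh hi hl hhalf hBU (hB.inter (isOpen_half e))
      (hBc.inter (convex_half e)) (hBb.subset inter_subset_left) hne⟩

theorem pprop_int {n : ℕ} {Ω : Set (EVec n)} (hΩ : IsOpen Ω) {x : EVec n} (hx : x ∈ Ω) :
    ∃ O : Set (EVec n), IsOpen O ∧ x ∈ O ∧ (O ∩ Ω).Nonempty ∧ PProp Ω (O ∩ Ω) := by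
  obtain ⟨r, hr, hrU⟩ := Metric.isOpen_iff.1 hΩ x hx
  refine ⟨Metric.ball x r, Metric.isOpen_ball, Metric.mem_ball_self hr, ⟨x, Metric.mem_ball_self hr, hx⟩, ?_⟩
  rw [inter_eq_left.2 hrU]
  exact pprop_chart hΩ Metric.isOpen_ball (convex_ball _ _) ⟨x, Metric.mem_ball_self hr⟩ Metric.isBounded_ball
    (K := 1) (g := id) (h := id) LipschitzWith.id (LipschitzWith.id.lipschitzOnWith) hrU
    (fun y hy => ⟨hy, rfl⟩) (fun y hy => ⟨hy, rfl⟩)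

theorem pprop_all {n : ℕ} {Ω : Set (EVec n)} (hΩ : IsOpen Ω) (hne : Ω.Nonempty) (hc : IsConnected Ω)
    (hb : Bornology.IsBounded Ω)
    (hfr : ∀ x ∈ frontier Ω, ∃ (U : Set (EVec n)) (h hinv : EVec n → EVec n) (K : NNReal)
      (e : EVec n),
    ‖e‖ = 1 ∧ IsOpen U ∧ x ∈ U ∧ LipschitzOnWith K h U ∧
    LipschitzOnWith K hinv (h '' U) ∧ (∀ y ∈ U, hinv (h y) = y) ∧
    h '' (U ∩ Ω) = (h '' U) ∩ {y : EVec n | 0 < ⟪e, y⟫}) : PProp Ω Ω := by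
  have key : ∀ x ∈ closure Ω, ∃ O : Set (EVec n), IsOpen O ∧ x ∈ O ∧ (O ∩ Ω).Nonempty ∧ PProp Ω (O ∩ Ω) := by
    intro x hx
    by_cases hxΩ : x ∈ Ω
    · exact pprop_int hΩ hxΩ
    · have : x ∈ frontier Ω := by rw [hΩ.frontier_eq]; exact ⟨hx, hxΩ⟩
      obtain ⟨U, h, hinv, K, e, he, hU, hxU, hh, hi, hl, hhalf⟩ := hfr x this
      exact pprop_bdry hΩ hx he hU hxU hh hi hl hhalf
  choose! O hO using key
  obtain ⟨t, ht, hcov⟩ := hb.isCompact_closure.elim_nhds_subcover O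
    (fun x hx => (hO x hx).1.mem_nhds (hO x hx).2.1)
  refine pprop_glue hc.isPreconnected hne hb t (fun i => O i ∩ Ω) (fun i hi => ?_) ?_
  · obtain ⟨h1, -, h3, h4⟩ := hO i (ht i hi)
    exact ⟨h1.inter hΩ, h3, inter_subset_right, h4⟩
  · intro x hx
    obtain ⟨i, hi, hxi⟩ := mem_iUnion₂.1 (hcov (subset_closure hx))
    exact mem_iUnion₂.2 ⟨i, hi, hxi, hx⟩

theorem poinc_zero {n : ℕ} {Ω : Set (EVec n)} (hne : Ω.Nonempty) (hΩ : IsOpen Ω)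
    (hb : Bornology.IsBounded Ω) (hP : PProp Ω Ω) :
    ∃ C : ℝ, 0 ≤ C ∧ ∀ (w : EVec n → ℝ) (q : EVec n → Fin n → ℝ), ScalarWeak Ω w q → ∫ x in Ω, w x = 0 →
      ∫ x in Ω, |w x| ≤ C * ∑ i, ∫ x in Ω, |q x i| := by
  obtain ⟨C, hC, hP⟩ := hP
  refine ⟨2 * C.toReal, by positivity, fun w q hw h0 => ?_⟩
  obtain ⟨c, hc⟩ := hP w q hw
  have hfin : volume Ω ≠ ⊤ := hb.measure_lt_top.ne
  have hS : ∑ i, ∫⁻ x in Ω, ‖q x i‖ₑ = ENNReal.ofReal (∑ i, ∫ x in Ω, |q x i|) := by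
    rw [ENNReal.ofReal_sum_of_nonneg fun i _ => integral_nonneg fun x => abs_nonneg _]
    exact Finset.sum_congr rfl fun i _ => (ofReal_integral_norm_eq_lintegral_enorm (hw.2.1 i)).symm
  have hconst : IntegrableOn (fun _ : EVec n => c) Ω volume := integrableOn_const hfin
  have h1 : ∫ x in Ω, |w x - c| ≤ C.toReal * ∑ i, ∫ x in Ω, |q x i| := by
    have h2 : ENNReal.ofReal (∫ x in Ω, |w x - c|) = ∫⁻ x in Ω, ‖w x - c‖ₑ :=
      ofReal_integral_norm_eq_lintegral_enorm (hw.1.sub hconst)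
    rw [← h2, hS, ← ENNReal.ofReal_toReal hC, ← ENNReal.ofReal_mul ENNReal.toReal_nonneg] at hc
    refine (ENNReal.ofReal_le_ofReal_iff ?_).1 hc
    exact mul_nonneg ENNReal.toReal_nonneg (Finset.sum_nonneg fun i _ => integral_nonneg fun x => abs_nonneg _)
  have h3 : ∫ x in Ω, |c| ≤ ∫ x in Ω, |w x - c| := by
    have h4 : ∫ x in Ω, (w x - c) = - ∫ x in Ω, c := by
      rw [integral_sub hw.1 hconst, h0, zero_sub]
    have h5 : |∫ x in Ω, (w x - c)| ≤ ∫ x in Ω, |w x - c| := abs_integral_le_integral_abs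
    rw [h4, abs_neg, setIntegral_const, smul_eq_mul, abs_mul, abs_of_nonneg measureReal_nonneg] at h5
    rwa [setIntegral_const, smul_eq_mul]
  calc ∫ x in Ω, |w x| ≤ ∫ x in Ω, (|w x - c| + |c|) := by
        refine integral_mono hw.1.abs ((hw.1.sub hconst).abs.add hconst.abs) fun x => ?_
        have : w x = (w x - c) + c := by ring
        calc |w x| = |(w x - c) + c| := by rw [← this]
          _ ≤ _ := abs_add_le _ _
    _ = (∫ x in Ω, |w x - c|) + ∫ x in Ω, |c| := integral_add (hw.1.sub hconst).abs hconst.abs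
    _ ≤ _ := by linarith

theorem mdot_self_nonneg {ι κ : Type*} [Fintype ι] [Fintype κ] (A : ι → κ → ℝ) : 0 ≤ mdot A A :=
  Finset.sum_nonneg fun a _ => Finset.sum_nonneg fun i _ => mul_self_nonneg _

theorem mnorm_nonneg {ι κ : Type*} [Fintype ι] [Fintype κ] (A : ι → κ → ℝ) : 0 ≤ mnorm A := Real.sqrt_nonneg _

theorem abs_le_mnorm {ι κ : Type*} [Fintype ι] [Fintype κ] (A : ι → κ → ℝ) (a : ι) (i : κ) : |A a i| ≤ mnorm A := by
  refine Real.abs_le_sqrt ?_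
  rw [sq]
  refine le_trans ?_ (Finset.single_le_sum (f := fun a => ∑ i, A a i * A a i) (fun a _ => Finset.sum_nonneg fun i _ => mul_self_nonneg _) (Finset.mem_univ a))
  exact Finset.single_le_sum (f := fun i => A a i * A a i) (fun i _ => mul_self_nonneg _) (Finset.mem_univ i)

theorem mdot_le {ι κ : Type*} [Fintype ι] [Fintype κ] (A B : ι → κ → ℝ) : |mdot A B| ≤ mnorm A * mnorm B := by
  unfold mnorm
  rw [← Real.sqrt_mul (mdot_self_nonneg A)]
  refine Real.abs_le_sqrt ?_
  have := Finset.sum_mul_sq_le_sq_mul_sq (Finset.univ : Finset (ι × κ)) (fun p => A p.1 p.2) (fun p => B p.1 p.2)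
  simp only [Fintype.sum_prod_type, sq (_ : ℝ)] at this
  simpa [mdot, sq] using this

theorem vnorm_le_sum {ι : Type*} [Fintype ι] (v : ι → ℝ) : vnorm v ≤ ∑ a, |v a| := by
  refine Real.sqrt_le_iff.2 ⟨Finset.sum_nonneg fun _ _ => abs_nonneg _, ?_⟩
  have := Finset.sum_sq_le_sq_sum_of_nonneg (s := Finset.univ) (f := fun a => |v a|) (fun a _ => abs_nonneg _)
  simpa using this

theorem mnorm_le_sum {ι κ : Type*} [Fintype ι] [Fintype κ] (A : ι → κ → ℝ) : mnorm A ≤ ∑ a, ∑ i, |A a i| := by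
  refine (?_ : mnorm A ≤ ∑ p : ι × κ, |A p.1 p.2|).trans (le_of_eq (Fintype.sum_prod_type _))
  refine le_trans (le_of_eq ?_) (vnorm_le_sum (fun p : ι × κ => A p.1 p.2))
  simp [mnorm, vnorm, mdot, Fintype.sum_prod_type, sq]

theorem continuous_mdot {ι κ : Type*} [Fintype ι] [Fintype κ] :
    Continuous (fun p : (ι → κ → ℝ) × (ι → κ → ℝ) => mdot p.1 p.2) := by
  unfold mdot; fun_prop

theorem continuous_mnorm {ι κ : Type*} [Fintype ι] [Fintype κ] :
    Continuous (fun A : ι → κ → ℝ => mnorm A) := by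
  unfold mnorm mdot; fun_prop

theorem continuous_vnorm {ι : Type*} [Fintype ι] : Continuous (fun A : ι → ℝ => vnorm A) := by
  unfold vnorm; fun_prop

theorem weak_comp {n N : ℕ} {Ω : Set (EVec n)} {w : EVec n → Fin N → ℝ} {Dw : EVec n → Fin N → Fin n → ℝ}
    (h : HasWeakDerivOn Ω w Dw) (a : Fin N) : ScalarWeak Ω (fun x => w x a) (fun x => Dw x a) :=
  ⟨h.1.eval a, fun i => (h.2.1.eval a).eval i, fun φ h1 h2 h3 i => h.2.2 φ h1 h2 h3 a i⟩

theorem int_mnorm {n N : ℕ} {Ω : Set (EVec n)} {w : EVec n → Fin N → ℝ} {Dw : EVec n → Fin N → Fin n → ℝ}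
    (h : HasWeakDerivOn Ω w Dw) : IntegrableOn (fun x => mnorm (Dw x)) Ω volume := by
  refine Integrable.mono' (g := fun x => ∑ a, ∑ i, |Dw x a i|)
    (integrable_finsetSum _ fun a _ => integrable_finsetSum _ fun i _ => ((weak_comp h a).2.1 i).abs)
    (continuous_mnorm.comp_aestronglyMeasurable h.2.1.aestronglyMeasurable) (ae_of_all _ fun x => ?_)
  rw [Real.norm_of_nonneg (mnorm_nonneg _)]
  exact mnorm_le_sum _

theorem poinc_vec {n N : ℕ} {Ω : Set (EVec n)} (hΩ : IsLipschitzDomain Ω) (hb : Bornology.IsBounded Ω) :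
    ∃ C : ℝ, 0 ≤ C ∧ ∀ (w : EVec n → Fin N → ℝ) (Dw : EVec n → Fin N → Fin n → ℝ),
      HasWeakDerivOn Ω w Dw → ZeroMean Ω w → ∫ x in Ω, vnorm (w x) ≤ C * ∫ x in Ω, mnorm (Dw x) := by
  obtain ⟨ho, hne, hc, hfr⟩ := hΩ
  obtain ⟨C, hC, hP⟩ := poinc_zero hne ho hb (pprop_all ho hne hc hb hfr)
  refine ⟨N * (C * n), by positivity, fun w Dw hw h0 => ?_⟩
  have hs : Integrable (fun x => ∑ a, |w x a|) (volume.restrict Ω) :=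
    integrable_finsetSum _ fun a _ => (weak_comp hw a).1.abs
  calc ∫ x in Ω, vnorm (w x) ≤ ∫ x in Ω, ∑ a, |w x a| := by
        refine integral_mono (hs.mono' (continuous_vnorm.comp_aestronglyMeasurable hw.1.aestronglyMeasurable)
          (ae_of_all _ fun x => ?_)) hs fun x => vnorm_le_sum _
        have hv : 0 ≤ vnorm (w x) := Real.sqrt_nonneg _
        rw [Real.norm_of_nonneg hv]
        exact vnorm_le_sum _
    _ = ∑ a, ∫ x in Ω, |w x a| := integral_finsetSum _ fun a _ => (weak_comp hw a).1.abs
    _ ≤ ∑ a : Fin N, C * ∑ i : Fin n, ∫ x in Ω, mnorm (Dw x) := by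
        refine Finset.sum_le_sum fun a _ => (hP _ _ (weak_comp hw a) (h0 a)).trans ?_
        refine mul_le_mul_of_nonneg_left (Finset.sum_le_sum fun i _ => ?_) hC
        exact integral_mono ((weak_comp hw a).2.1 i).abs (int_mnorm hw) fun x => abs_le_mnorm _ _ _
    _ = _ := by simp; ring

theorem coer_pt {f f' : ℝ → ℝ} {finf T : ℝ} (hT0 : 0 ≤ T) (hT : T < finf)
    (hderiv : ∀ t ∈ Set.Ici (0:ℝ), HasDerivWithinAt f (f' t) (Set.Ici 0) t)
    (hconv : ConvexOn ℝ (Set.Ici 0) f) (hf0 : f 0 = 0) (hf'0 : f' 0 = 0)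
    (hfinf : Filter.Tendsto (fun t => f t / t) Filter.atTop (nhds finf)) :
    ∃ R : ℝ, 0 < R ∧ ∀ t, 0 ≤ t → (1 / 2) * (finf - T) * t - finf * R ≤ f t - T * t := by
  have hpos : ∀ t, 0 ≤ t → 0 ≤ f t := by
    intro t ht
    rcases eq_or_lt_of_le ht with h | h
    · rw [← h, hf0]
    · have h1 := hconv.le_slope_of_hasDerivWithinAt (mem_Ici.2 le_rfl) (mem_Ici.2 ht) h (hderiv 0 (mem_Ici.2 le_rfl))
      rw [hf'0, slope_def_field, hf0, sub_zero, sub_zero] at h1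
      have := mul_nonneg h1 ht
      rwa [div_mul_cancel₀ _ h.ne'] at this
  have hmid : (finf + T) / 2 < finf := by linarith
  obtain ⟨R, hR⟩ := eventually_atTop.1 (hfinf.eventually (lt_mem_nhds hmid))
  refine ⟨max R 1, by positivity, fun t ht => ?_⟩
  have hR1 : 0 < max R 1 := by positivity
  rcases le_total (max R 1) t with h | h
  · have h1 := hR t ((le_max_left _ _).trans h)
    have htp : 0 < t := hR1.trans_le h
    rw [lt_div_iff₀ htp] at h1
    have : 0 ≤ finf * max R 1 := mul_nonneg (hT0.trans hT.le) hR1.le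
    nlinarith
  · have h1 := hpos t ht
    have h2 : finf * t ≤ finf * max R 1 := mul_le_mul_of_nonneg_left h (hT0.trans hT.le)
    have h3 : T * t ≤ finf * t := mul_le_mul_of_nonneg_right hT.le ht
    nlinarith

/-- **Coerciveness of `𝔉` (Section 1.1).** Under the coerciveness condition
`‖T₀‖_{L^∞} < f^∞(1)` there is `R₀ > 0` such that
`𝔉[w] ≥ ½(f^∞(1) − ‖T₀‖_∞)‖∇w‖_{L¹} − f^∞(1)|Ω|R₀` for all `w ∈ W^{1,1}(Ω;ℝ^N)`;
in particular `𝔉[w_k] → ∞` along any sequence with zero mean and `W^{1,1}`-norms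
tending to `∞`. -/
theorem coerciveness_of_FF
    {n N : ℕ} (Ω : Set (EVec n))
    (hΩ : IsLipschitzDomain Ω) (hΩbdd : Bornology.IsBounded Ω)
    (ν L : ℝ) (hν : 0 < ν) (hνL : ν ≤ L)
    (f f' : ℝ → ℝ)
    (hderiv : ∀ t ∈ Set.Ici (0:ℝ), HasDerivWithinAt f (f' t) (Set.Ici 0) t)
    (hf'cont : ContinuousOn f' (Set.Ici 0))
    (hconv : ConvexOn ℝ (Set.Ici 0) f)
    (hf0 : f 0 = 0) (hf'0 : f' 0 = 0)
    (hgrowth : ∀ t ∈ Set.Ici (0:ℝ), ν * t - L ≤ f t ∧ f t ≤ L * (t + 1))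
    (finf : ℝ) (hfinf : Filter.Tendsto (fun t => f t / t) Filter.atTop (nhds finf))
    (T₀ : EVec n → Fin N → Fin n → ℝ)
    (hTmeas : AEStronglyMeasurable T₀ (volume.restrict Ω))
    (hTsmall : linfNormOn Ω T₀ < ENNReal.ofReal finf) :
    ∃ R₀ : ℝ, 0 < R₀ ∧
      (∀ (w : EVec n → Fin N → ℝ) (Dw : EVec n → Fin N → Fin n → ℝ),
        HasWeakDerivOn Ω w Dw →
          (1 / 2) * (finf - (linfNormOn Ω T₀).toReal) * (∫ x in Ω, mnorm (Dw x)) -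
              finf * (volume Ω).toReal * R₀ ≤ FF Ω f T₀ Dw) ∧
      (∀ (w : ℕ → EVec n → Fin N → ℝ) (Dw : ℕ → EVec n → Fin N → Fin n → ℝ),
        (∀ k, HasWeakDerivOn Ω (w k) (Dw k) ∧ ZeroMean Ω (w k)) →
        Filter.Tendsto
          (fun k => (∫ x in Ω, vnorm (w k x)) + ∫ x in Ω, mnorm (Dw k x))
          Filter.atTop Filter.atTop →
        Filter.Tendsto (fun k => FF Ω f T₀ (Dw k)) Filter.atTop Filter.atTop) := by
  have hfin_pos : 0 < finf := by
    by_contra h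
    rw [ENNReal.ofReal_of_nonpos (not_lt.1 h)] at hTsmall
    exact not_lt_zero hTsmall
  have hTtop : linfNormOn Ω T₀ ≠ ⊤ := (hTsmall.trans ENNReal.ofReal_lt_top).ne
  have hTlt : (linfNormOn Ω T₀).toReal < finf := by
    have := (ENNReal.lt_ofReal_iff_toReal_lt hTtop).1 hTsmall
    exact this
  have hTae : ∀ᵐ x ∂(volume.restrict Ω), mnorm (T₀ x) ≤ (linfNormOn Ω T₀).toReal := by
    have h1 : ∀ᵐ x ∂(volume.restrict Ω), ENNReal.ofReal (mnorm (T₀ x)) ≤ linfNormOn Ω T₀ :=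
      ENNReal.ae_le_essSup _
    filter_upwards [h1] with x hx
    exact (ENNReal.ofReal_le_iff_le_toReal hTtop).1 hx
  have hT0 : 0 ≤ (linfNormOn Ω T₀).toReal := ENNReal.toReal_nonneg
  generalize (linfNormOn Ω T₀).toReal = T at hTlt hTae hT0 ⊢
  obtain ⟨R, hR, hpt⟩ := coer_pt hT0 hTlt hderiv hconv hf0 hf'0 hfinf
  have hvol : volume Ω ≠ ⊤ := hΩbdd.measure_lt_top.ne
  have hfc : Continuous (fun A : Fin N → Fin n → ℝ => f (mnorm A)) :=
    ContinuousOn.comp_continuous (s := Set.Ici 0) (fun t ht => (hderiv t ht).continuousWithinAt)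
      continuous_mnorm (fun A => mnorm_nonneg A)
  have hL : 0 < L := hν.trans_le hνL
  have part1 : ∀ (w : EVec n → Fin N → ℝ) (Dw : EVec n → Fin N → Fin n → ℝ),
        HasWeakDerivOn Ω w Dw →
          (1 / 2) * (finf - T) * (∫ x in Ω, mnorm (Dw x)) -
              finf * (volume Ω).toReal * R ≤ FF Ω f T₀ Dw := by
    intro w Dw hw
    have hm := int_mnorm hw
    have hc : ∀ c : ℝ, IntegrableOn (fun _ : EVec n => c) Ω volume := fun c => integrableOn_const hvol
    have hDm := hw.2.1.aestronglyMeasurable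
    have hif : IntegrableOn (fun x => f (mnorm (Dw x))) Ω volume := by
      refine Integrable.mono' (g := fun x => L * (mnorm (Dw x) + 1)) ((hm.add (hc 1)).const_mul L)
        (hfc.comp_aestronglyMeasurable hDm) (ae_of_all _ fun x => ?_)
      have h1 := hgrowth _ (mem_Ici.2 (mnorm_nonneg (Dw x)))
      have h2 := mul_nonneg hν.le (mnorm_nonneg (Dw x))
      have h3 := mul_nonneg hL.le (mnorm_nonneg (Dw x))
      rw [Real.norm_eq_abs, abs_le]
      constructor <;> nlinarith [h1.1, h1.2]
    have hid : IntegrableOn (fun x => mdot (T₀ x) (Dw x)) Ω volume := by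
      refine Integrable.mono' (g := fun x => T * mnorm (Dw x)) (hm.const_mul T)
        (continuous_mdot.comp_aestronglyMeasurable (hTmeas.prodMk hDm)) ?_
      filter_upwards [hTae] with x hx
      exact (mdot_le _ _).trans (mul_le_mul_of_nonneg_right hx (mnorm_nonneg _))
    have e : (1 / 2) * (finf - T) * (∫ x in Ω, mnorm (Dw x)) - finf * (volume Ω).toReal * R =
        ∫ x in Ω, ((1 / 2) * (finf - T) * mnorm (Dw x) - finf * R) := by
      rw [integral_sub (hm.const_mul _) (hc _), integral_const_mul, setIntegral_const, smul_eq_mul]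
      rw [measureReal_def]; ring
    rw [e]
    refine integral_mono_ae ((hm.const_mul _).sub (hc _)) (hif.sub hid) ?_
    filter_upwards [hTae] with x hx
    have h1 := hpt _ (mnorm_nonneg (Dw x))
    have h2 := (le_abs_self _).trans ((mdot_le (T₀ x) (Dw x)).trans (mul_le_mul_of_nonneg_right hx (mnorm_nonneg _)))
    linarith
  refine ⟨R, hR, part1, fun w Dw hw ht => ?_⟩
  obtain ⟨C, hC, hP⟩ := poinc_vec (N := N) hΩ hΩbdd
  have hk : 0 < (1 / 2) * (finf - T) / (C + 1) := by
    have : 0 < finf - T := by linarith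
    positivity
  refine tendsto_atTop_mono (fun k => ?_) (tendsto_atTop_add_const_right _ (-(finf * (volume Ω).toReal * R)) (ht.const_mul_atTop hk))
  refine le_trans ?_ (part1 (w k) (Dw k) (hw k).1)
  have h1 := hP (w k) (Dw k) (hw k).1 (hw k).2
  have h2 : (1 / 2) * (finf - T) / (C + 1) * ((∫ x in Ω, vnorm (w k x)) + ∫ x in Ω, mnorm (Dw k x)) ≤
      (1 / 2) * (finf - T) / (C + 1) * ((C + 1) * ∫ x in Ω, mnorm (Dw k x)) := by
    refine mul_le_mul_of_nonneg_left ?_ hk.le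
    linarith
  have h3 : (1 / 2) * (finf - T) / (C + 1) * ((C + 1) * ∫ x in Ω, mnorm (Dw k x)) =
      (1 / 2) * (finf - T) * ∫ x in Ω, mnorm (Dw k x) := by
    have : C + 1 ≠ 0 := by positivity
    field_simp
  linarith
end
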